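/- Let p be a prime and let (A, m) be a regular local ring equipped with a ring endomorphism φ : A → A that is a lift of Frobenius (φ(a) ≡ a^p mod pA for all a) and is finite (A is a finite module over itself via φ). Assume p ∈ m \ m², and set Ā := A/pA (a regular local ring of characteristic p). Fix u ∈ Hom_Ā(F_*Ā, Ā) that generates Hom_Ā(F_*Ā, Ā) as an F_*Ā-module, i.e. every Ā-linear map F_*Ā → Ā is of the form x ↦ u(c·x) for some c ∈ Ā. Let f_1, …, f_r be a regular sequence in A, set I := (f_1, …, f_r)Ā, f := f_1⋯f_r, and R := A/(f_1, …, f_r), and assume p is a nonzerodivisor on R. Define ideals of Ā by I_1 := f^{p−1}Ā + I^{[p]} and, inductively for n ≥ 2, I_n := u(F_*(Δ_1(f^{p−1})·I_{n−1})) + I_1, where Δ_1(f^{p−1}) ∈ Ā denotes the image mod p of the unique element Δ_1(f^{p−1}) ∈ A with p·Δ_1(f^{p−1}) = f^{p(p−1)} − φ(f^{p−1}), and u(F_*J) denotes the ideal {u(x) : x ∈ J} of Ā. Then sht(R) = inf{n ≥ 1 : I_n ⊄ m^{[p]}}, where m^{[p]} ⊆ Ā is the ideal generated by the p-th powers of the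 elements of the maximal ideal of Ā, and the infimum of the empty set is ∞. -/

import Mathlib

/-!
Write `B = A/p`, `I = (f₁, …, f_r)B`, `g = (f₁⋯f_r)^{p-1}` and `Q = R/p = B/I`.  Since `A` is
`p`-torsion free, `φ` induces a ring section `s_φ : A → W(A)` (`wittLift`) of `W(A) → A`, so that
every Witt vector is uniquely `x = s_φ(x₀) + V(Y x)` with `Y` additive.

A splitting of `Φ_{R,n}` is the same as an additive map `σ : W(A) → Q` with
`σ([a^p] x) = a σ(x)` and `σ(1) = 1` which vanishes on Witt vectors whose first `n` coefficients lie
in `(f₁, …, f_r)` (`isNQuasiFSplit_iff`).  Because `B` is regular with finite Frobenius, `F_*B` is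
free (`free_of_isWeaklyRegular`) and the generator `u` has a dual family (`exists_dual_family`);
hence every `p⁻¹`-linear map `B → Q` has the form `x ↦ u(cx) mod I`.  Applying this to `σ ∘ s_φ` and,
by induction on `n`, to `σ ∘ V`, together with the colon formulas
`(I^{[p]} : I) = gB + I^{[p]}` and `(I^{[p]} : g) = I`, gives
`σ(x) = u(c x₀) + u(g ψ(Y x)) mod I`, where `ψ : W(A) → B` is of the same type for `n - 1`
(`FedderSetup.exists_isFun`).  Such an expression kills the Teichmüller elements `[a]`, `a ∈ I`, iff
`c ≡ ψ(Y [g])` modulo `I₁`: this follows from the product formula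
`Y[ga] = [g^p] Y[a] + Y[g] s_φ(φ a)` and `ga ∈ (f_i^p)` for `a ∈ (f_i)`
(`FedderSetup.IsFun.key`, `FedderSetup.IsFun.kills`).

It remains to see which `c` occur.  With `pΔ = g^p - φ(g)` one has `Y[g] = s_φ(Δ) + V z`, where `z` is
known modulo `p` (`wittRem_teichmuller_structure`); evaluating the functional above at `Y[g]` gives
`u(Δ c)` modulo `I₁`, up to changing `c` by an element of `gB`.  So the admissible `c` at level
`n` form exactly the ideal `I_n` (`FedderSetup.exists_isFun_iff_mem`).  As `σ(1) = u(c)`, a splitting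
exists iff `u(c) ≡ 1` modulo `I` for some `c ∈ I_n`, and, by the dual family and locality of `B`,
this means `I_n ⊄ m^{[p]}` (`FedderSetup.exists_u_eq_one_iff`).
-/

/-- `S` is `n`-quasi-`F`-split: the ring homomorphism
`Φ_{S,n} : S̄ → Q_{S,n} = W_n(S)/pW_n(S)`, `a mod p ↦ [a^p] mod p`, admits an
`S̄`-linear left inverse (`Q_{S,n}` is an `S̄`-module via `Φ_{S,n}`).  Equivalently
(composing with the surjection `W_n(S) → W_n(S)/pW_n(S)`; additive maps to the
characteristic-`p` ring `S̄` automatically kill `pW_n(S)`): there is an additive map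
`σ : W_n(S) → S̄` which is `S̄`-semilinear for the `Φ`-action and satisfies
`σ([a^p]) = a mod p` for all `a : S`. -/
def IsNQuasiFSplit (p : ℕ) [Fact p.Prime] (S : Type*) [CommRing S] (n : ℕ) : Prop :=
  ∃ σ : TruncatedWittVector p n S → S ⧸ Ideal.span {(p : S)},
    (∀ x y : TruncatedWittVector p n S, σ (x + y) = σ x + σ y) ∧
    (∀ (a : S) (x : TruncatedWittVector p n S),
      σ (WittVector.truncate n (WittVector.teichmuller p (a ^ p)) * x)
        = Ideal.Quotient.mk _ a * σ x) ∧
    (∀ a : S,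
      σ (WittVector.truncate n (WittVector.teichmuller p (a ^ p)))
        = Ideal.Quotient.mk _ a)

/-- The quasi-`F`-splitting height `sht(S) ∈ ℕ ∪ {∞}`. -/
noncomputable def sht (p : ℕ) [Fact p.Prime] (S : Type*) [CommRing S] : ℕ∞ :=
  sInf {k : ℕ∞ | ∃ n : ℕ, k = (n : ℕ∞) ∧ 1 ≤ n ∧ IsNQuasiFSplit p S n}

/-! ### Witt vectors of a ring with a Frobenius lift -/

section WittLift

open WittVector

variable {p : ℕ} [Fact p.Prime] {A : Type*} [CommRing A]

local notation "τ" => WittVector.teichmuller p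

theorem ghostComponent_eq_sum (x : WittVector p A) (n : ℕ) :
    ghostComponent n x = ∑ i ∈ Finset.range (n + 1), (p : A) ^ i * x.coeff i ^ p ^ (n - i) := by
  rw [ghostComponent_apply, aeval_wittPolynomial]

/-- Over a `p`-torsion-free ring a Witt vector is determined by its ghost components. -/
theorem eq_of_ghostComponent (htf : ∀ a : A, (p : A) * a = 0 → a = 0) {x y : WittVector p A}
    (h : ∀ n, ghostComponent n x = ghostComponent n y) : x = y := by
  have hpow : ∀ (n : ℕ) (a : A), (p : A) ^ n * a = 0 → a = 0 := by
    intro n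
    induction n with
    | zero => intro a ha; simpa using ha
    | succ k ih => intro a ha; exact ih a (htf _ (by rw [← ha]; ring))
  ext n
  induction n using Nat.strong_induction_on with
  | _ n ih =>
    have hn := h n
    rw [ghostComponent_eq_sum, ghostComponent_eq_sum, Finset.sum_range_succ,
      Finset.sum_range_succ,
      Finset.sum_congr rfl (fun i hi => by rw [ih i (Finset.mem_range.mp hi)])] at hn
    have h2 := add_left_cancel hn
    rw [Nat.sub_self, pow_zero, pow_one, pow_one] at h2
    exact sub_eq_zero.mp (hpow n _ (by rw [mul_sub, h2, sub_self]))

/-- The Witt coefficients of the vector with ghost components `a, φ a, φ² a, …`, obtained by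
solving the ghost equations one after the other (Dwork's lemma). -/
noncomputable def dworkCoeff (p : ℕ) (φ : A →+* A) (a : A) : ℕ → A
  | n => Function.invFun (fun t : A => (p : A) ^ n * t)
      (φ^[n] a - ∑ i : Fin n, (p : A) ^ (i : ℕ) * dworkCoeff p φ a i ^ p ^ (n - i))
  decreasing_by exact i.2

theorem dworkCoeff_spec (φ : A →+* A) (hφ : ∀ a : A, (p : A) ∣ (φ a - a ^ p)) (a : A) (n : ℕ) :
    ∑ i ∈ Finset.range (n + 1), (p : A) ^ i * dworkCoeff p φ a i ^ p ^ (n - i) = φ^[n] a := by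
  induction n with
  | zero =>
    have h : dworkCoeff p φ a 0 = a := by
      rw [dworkCoeff]
      have := Function.invFun_eq (f := fun t : A => (p : A) ^ 0 * t)
        (b := φ^[0] a - ∑ i : Fin 0, (p : A) ^ (i : ℕ) * dworkCoeff p φ a i ^ p ^ (0 - (i : ℕ)))
        ⟨a, by simp⟩
      simpa using this
    simp [h]
  | succ n ih =>
    rw [Finset.sum_range_succ]
    have key : (p : A) ^ (n + 1) ∣ φ^[n + 1] a - ∑ i : Fin (n + 1),
        (p : A) ^ (i : ℕ) * dworkCoeff p φ a i ^ p ^ (n + 1 - i) := by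
      rw [Finset.sum_fin_eq_sum_range, Function.iterate_succ_apply', ← ih, map_sum,
        ← Finset.sum_sub_distrib]
      apply Finset.dvd_sum
      intro i hi
      have hi' := Finset.mem_range.mp hi
      rw [dif_pos hi', map_mul, map_pow, map_pow, map_natCast, ← mul_sub]
      have h1 := dvd_sub_pow_of_dvd_sub (hφ (dworkCoeff p φ a i)) (n - i)
      have e1 : (p : A) ^ (n + 1) = (p : A) ^ i * (p : A) ^ (n - i + 1) := by
        rw [← pow_add]; congr 1; omega
      have e2 : p ^ (n + 1 - i) = p * p ^ (n - i) := by
        rw [← pow_succ']; congr 1; omega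
      rw [e1, e2, pow_mul]
      exact mul_dvd_mul_left _ h1
    obtain ⟨t, ht⟩ := key
    have h := Function.invFun_eq (f := fun t : A => (p : A) ^ (n + 1) * t) ⟨t, ht.symm⟩
    rw [← dworkCoeff] at h
    rw [Nat.sub_self, pow_zero, pow_one]
    have hsum : ∑ i : Fin (n + 1), (p : A) ^ (i : ℕ) * dworkCoeff p φ a i ^ p ^ (n + 1 - (i : ℕ)) =
        ∑ i ∈ Finset.range (n + 1), (p : A) ^ i * dworkCoeff p φ a i ^ p ^ (n + 1 - i) :=
      Fin.sum_univ_eq_sum_range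
        (fun i => (p : A) ^ i * dworkCoeff p φ a i ^ p ^ (n + 1 - i)) (n + 1)
    rw [h, hsum, add_sub_cancel]

/-- The ring homomorphism `s_φ : A → W(A)` attached to a Frobenius lift `φ` on a `p`-torsion-free
ring: `s_φ a` has ghost components `a, φ a, φ² a, …`. -/
noncomputable def wittLift (φ : A →+* A) (hφ : ∀ a : A, (p : A) ∣ (φ a - a ^ p))
    (htf : ∀ a : A, (p : A) * a = 0 → a = 0) : A →+* WittVector p A :=
  have hg : ∀ a n, ghostComponent n (WittVector.mk p (dworkCoeff p φ a)) = φ^[n] a := fun a n => by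
    rw [ghostComponent_eq_sum]; exact dworkCoeff_spec φ hφ a n
  { toFun := fun a => WittVector.mk p (dworkCoeff p φ a)
    map_one' := eq_of_ghostComponent htf fun n => by
      rw [hg, map_one, ← RingHom.coe_pow, map_one]
    map_zero' := eq_of_ghostComponent htf fun n => by
      rw [hg, map_zero, ← RingHom.coe_pow, map_zero]
    map_mul' := fun a b => eq_of_ghostComponent htf fun n => by
      rw [hg, map_mul, hg, hg, ← RingHom.coe_pow, map_mul]
    map_add' := fun a b => eq_of_ghostComponent htf fun n => by
      rw [hg, map_add, hg, hg, ← RingHom.coe_pow, map_add] }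

section Lift

variable (φ : A →+* A) (hφ : ∀ a : A, (p : A) ∣ (φ a - a ^ p))
    (htf : ∀ a : A, (p : A) * a = 0 → a = 0)

theorem ghostComponent_wittLift (a : A) (n : ℕ) :
    ghostComponent n (wittLift φ hφ htf a) = φ^[n] a := by
  rw [ghostComponent_eq_sum]; exact dworkCoeff_spec φ hφ a n

theorem wittLift_coeff_zero (a : A) : (wittLift φ hφ htf a).coeff 0 = a := by
  have := ghostComponent_wittLift φ hφ htf a 0
  rw [ghostComponent_eq_sum] at this
  simpa using this

theorem frobenius_wittLift (a : A) :
    frobenius (wittLift φ hφ htf a) = wittLift φ hφ htf (φ a) := by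
  apply eq_of_ghostComponent htf
  intro n
  rw [ghostComponent_frobenius, ghostComponent_wittLift, ghostComponent_wittLift,
    Function.iterate_succ_apply]

theorem frobenius_teichmuller (htf : ∀ a : A, (p : A) * a = 0 → a = 0) (a : A) :
    frobenius (τ a) = τ (a ^ p) := by
  apply eq_of_ghostComponent htf
  intro n
  rw [ghostComponent_frobenius, ghostComponent_teichmuller, ghostComponent_teichmuller, ← pow_mul,
    pow_succ']

theorem witt_torsionFree (htf : ∀ a : A, (p : A) * a = 0 → a = 0) (x y : WittVector p A)
    (h : (p : WittVector p A) * x = p * y) : x = y := by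
  apply eq_of_ghostComponent htf
  intro n
  have := congrArg (ghostComponent n) h
  simp only [map_mul, map_natCast] at this
  exact sub_eq_zero.mp (htf _ (by rw [mul_sub, this, sub_self]))

theorem teichmuller_add_verschiebung_shift (x : WittVector p A) :
    x = τ (x.coeff 0) + verschiebung (x.shift 1) := by
  ext n
  rw [coeff_add_of_disjoint]
  · cases n with
    | zero => simp
    | succ n => simp [shift_coeff, add_comm, teichmuller_coeff_pos]
  · intro n
    cases n with
    | zero => right; simp
    | succ n => left; simp [teichmuller_coeff_pos]

theorem eq_verschiebung_shift {x : WittVector p A} (h : x.coeff 0 = 0) :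
    verschiebung (x.shift 1) = x := by
  have := teichmuller_add_verschiebung_shift x
  rw [h, teichmuller_zero, zero_add] at this
  exact this.symm

theorem verschiebung_mul (x y : WittVector p A) :
    verschiebung x * y = verschiebung (x * frobenius y) :=
  (verschiebung_mul_frobenius x y).symm

theorem verschiebung_pow (y : WittVector p A) (k : ℕ) :
    verschiebung y ^ (k + 1) = (p : WittVector p A) ^ k * verschiebung (y ^ (k + 1)) := by
  induction k with
  | zero => simp
  | succ k ih =>
    have h : verschiebung (y ^ (k + 1)) * verschiebung y =
        (p : WittVector p A) * verschiebung (y ^ (k + 1 + 1)) := by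
      rw [verschiebung_mul, frobenius_verschiebung, ← mul_assoc, ← pow_succ,
        mul_comm, ← nsmul_eq_mul, map_nsmul, nsmul_eq_mul]
    rw [pow_succ, ih, mul_assoc, h, pow_succ (p : WittVector p A) k, mul_assoc]

/-- `x ^ p` depends modulo `p` only on the zeroth coefficient of `x`. -/
theorem exists_pow_eq (x : WittVector p A) :
    ∃ w, x ^ p = τ (x.coeff 0 ^ p) + (p : WittVector p A) * w := by
  have hp := (Fact.out : p.Prime)
  have hx := teichmuller_add_verschiebung_shift x
  obtain ⟨r, hr⟩ := exists_add_pow_prime_eq hp (τ (x.coeff 0)) (verschiebung (x.shift 1))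
  obtain ⟨k, hk⟩ := Nat.exists_eq_add_of_le' hp.two_le
  have h3 : verschiebung (x.shift 1) ^ p =
      (p : WittVector p A) ^ (k + 1) * verschiebung ((x.shift 1) ^ p) := by
    have := verschiebung_pow (x.shift 1) (k + 1)
    have e : k + 1 + 1 = p := hk.symm
    rwa [e] at this
  rw [← hx, h3] at hr
  refine ⟨(p : WittVector p A) ^ k * verschiebung ((x.shift 1) ^ p) +
    τ (x.coeff 0) * verschiebung (x.shift 1) * r, ?_⟩
  rw [hr, map_pow (WittVector.teichmuller p)]
  ring

/-- Teichmüller representatives of `p`-th powers are additive modulo `p`. -/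
theorem exists_teichmuller_add_pow (a b : A) :
    ∃ w, τ ((a + b) ^ p) = τ (a ^ p) + τ (b ^ p) + (p : WittVector p A) * w := by
  obtain ⟨w, hw⟩ := exists_pow_eq (τ a + τ b)
  obtain ⟨r, hr⟩ := exists_add_pow_prime_eq (Fact.out : p.Prime) (τ a) (τ b)
  rw [add_coeff_zero, teichmuller_coeff_zero, teichmuller_coeff_zero] at hw
  refine ⟨τ a * τ b * r - w, ?_⟩
  rw [map_pow _ a, map_pow _ b]
  linear_combination hr - hw

theorem exists_teichmuller_p_mul_pow (a : A) :
    ∃ w, τ (((p : A) * a) ^ p) = (p : WittVector p A) * w := by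
  obtain ⟨w, hw⟩ := exists_pow_eq ((p : WittVector p A) * τ a)
  have hp := (Fact.out : p.Prime)
  obtain ⟨k, hk⟩ := Nat.exists_eq_add_of_le' hp.one_le
  have h0 : ((p : WittVector p A) * τ a).coeff 0 = (p : A) * a := by
    rw [mul_coeff_zero, teichmuller_coeff_zero]
    congr 1
    exact map_natCast (WittVector.constantCoeff (p := p) (R := A)) p
  rw [h0] at hw
  refine ⟨(p : WittVector p A) ^ k * τ a ^ p - w, ?_⟩
  have e : (p : WittVector p A) ^ p = p ^ (k + 1) := congrArg _ hk
  rw [mul_pow, e] at hw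
  linear_combination - hw

/-- The defect `y = wittRem x` in the decomposition `x = s_φ(x₀) + V y`. -/
noncomputable def wittRem (x : WittVector p A) : WittVector p A :=
  (x - wittLift φ hφ htf (x.coeff 0)).shift 1

theorem verschiebung_wittRem (x : WittVector p A) :
    verschiebung (wittRem φ hφ htf x) = x - wittLift φ hφ htf (x.coeff 0) := by
  apply eq_verschiebung_shift
  have : (x - wittLift φ hφ htf (x.coeff 0)).coeff 0 =
      x.coeff 0 - (wittLift φ hφ htf (x.coeff 0)).coeff 0 :=
    map_sub (WittVector.constantCoeff (p := p) (R := A)) _ _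
  rw [this, wittLift_coeff_zero, sub_self]

theorem wittLift_add_verschiebung (x : WittVector p A) :
    x = wittLift φ hφ htf (x.coeff 0) + verschiebung (wittRem φ hφ htf x) := by
  rw [verschiebung_wittRem]; ring

theorem wittRem_eq {x y : WittVector p A} {a : A}
    (h : x = wittLift φ hφ htf a + verschiebung y) : wittRem φ hφ htf x = y := by
  have h0 : x.coeff 0 = a := by
    rw [h, add_coeff_zero, wittLift_coeff_zero, verschiebung_coeff_zero, add_zero]
  apply verschiebung_injective p A
  rw [verschiebung_wittRem, h0, h]; ring

theorem wittRem_add (x y : WittVector p A) :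
    wittRem φ hφ htf (x + y) = wittRem φ hφ htf x + wittRem φ hφ htf y := by
  apply wittRem_eq φ hφ htf (a := x.coeff 0 + y.coeff 0)
  rw [map_add, map_add, verschiebung_wittRem, verschiebung_wittRem]; ring

theorem wittRem_verschiebung (y : WittVector p A) : wittRem φ hφ htf (verschiebung y) = y :=
  wittRem_eq φ hφ htf (a := 0) (by rw [map_zero, zero_add])

theorem wittRem_wittLift (a : A) : wittRem φ hφ htf (wittLift φ hφ htf a) = 0 :=
  wittRem_eq φ hφ htf (a := a) (by rw [map_zero, add_zero])

/-- `y_{ab} = [a^p] y_b + y_a s_φ(φ b)`, where `[a] = s_φ(a) + V y_a`. -/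
theorem wittRem_teichmuller_mul (a b : A) :
    wittRem φ hφ htf (τ (a * b)) = τ (a ^ p) * wittRem φ hφ htf (τ b) +
      wittRem φ hφ htf (τ a) * wittLift φ hφ htf (φ b) := by
  apply wittRem_eq φ hφ htf (a := a * b)
  have h1 : verschiebung (τ (a ^ p) * wittRem φ hφ htf (τ b)) =
      τ a * verschiebung (wittRem φ hφ htf (τ b)) := by
    rw [mul_comm (τ a), verschiebung_mul, frobenius_teichmuller htf, mul_comm]
  have h2 : verschiebung (wittRem φ hφ htf (τ a) * wittLift φ hφ htf (φ b)) =
      verschiebung (wittRem φ hφ htf (τ a)) * wittLift φ hφ htf b := by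
    rw [verschiebung_mul, frobenius_wittLift]
  rw [map_add, h1, h2, verschiebung_wittRem, verschiebung_wittRem, teichmuller_coeff_zero,
    teichmuller_coeff_zero, map_mul, map_mul]
  ring

/-- `s_φ(φ a) ≡ [a^p]` modulo `p`. -/
theorem exists_wittLift_map (a : A) :
    ∃ w, wittLift φ hφ htf (φ a) = τ (a ^ p) + (p : WittVector p A) * w := by
  obtain ⟨t, ht⟩ := hφ a
  obtain ⟨w, hw⟩ := exists_pow_eq (wittLift φ hφ htf a)
  rw [wittLift_coeff_zero] at hw
  refine ⟨wittLift φ hφ htf t + w, ?_⟩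
  have h : wittLift φ hφ htf (φ a) = wittLift φ hφ htf (a ^ p + (p : A) * t) := by
    congr 1; linear_combination ht
  rw [h, map_add, map_pow, hw, map_mul, map_natCast]
  ring

end Lift

/-- The binomial expansion of `(X - t) ^ p` for prime `p`, modulo `p t²`. -/
theorem exists_sub_pow_prime {W : Type*} [CommRing W] {p : ℕ} (hp : p.Prime) (X t : W) :
    ∃ Q, (X - t) ^ p = X ^ p - p * X ^ (p - 1) * t + (-t) ^ p + p * t ^ 2 * Q := by
  obtain ⟨k, rfl⟩ := Nat.exists_eq_add_of_le' hp.two_le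
  have hmid : ∃ Q, ∑ m ∈ Finset.range k,
      X ^ (m + 1) * (-t) ^ (k + 2 - (m + 1)) * ((k + 2).choose (m + 1) : W) =
        ((k + 2 : ℕ) : W) * t ^ 2 * Q := by
    apply Finset.dvd_sum
    intro m hm
    have hm := Finset.mem_range.mp hm
    obtain ⟨d, hd⟩ := hp.dvd_choose_self (Nat.succ_ne_zero m) (by omega : m + 1 < k + 2)
    have e : k + 2 - (m + 1) = 2 + (k - 1 - m) := by omega
    rw [e, hd, pow_add]
    exact ⟨X ^ (m + 1) * (-t) ^ (k - 1 - m) * d, by push_cast; ring⟩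
  obtain ⟨Q, hQ⟩ := hmid
  refine ⟨Q, ?_⟩
  rw [sub_eq_add_neg, add_pow, Finset.sum_range_succ, Finset.sum_range_succ,
    Finset.sum_range_succ', hQ]
  have e : k + 2 - (k + 1) = 1 := by omega
  have e' : k + 2 - 1 = k + 1 := by omega
  have e'' : (k + 2).choose (k + 1) = k + 2 := Nat.choose_succ_self_right (k + 1)
  rw [e, e', e'']
  simp
  ring

section Lift2

variable (φ : A →+* A) (hφ : ∀ a : A, (p : A) ∣ (φ a - a ^ p))
    (htf : ∀ a : A, (p : A) * a = 0 → a = 0)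

/-- The structure of `y_g`, where `[g] = s_φ(g) + V y_g`: with `p Δ = g^p - φ g` one has
`y_g = s_φ(Δ) + V z`, where moreover `y_{g^p} = p z` and
`z ≡ [g^{p(p-1)}] y_g ± p^{p-2} [Δ^p]` modulo `p`; the last term only matters for `p = 2`. -/
theorem wittRem_teichmuller_structure (g Δ : A) (hΔ : (p : A) * Δ = g ^ p - φ g) :
    ∃ z w : WittVector p A, wittRem φ hφ htf (τ g) = wittLift φ hφ htf Δ + verschiebung z ∧
      wittRem φ hφ htf (τ (g ^ p)) = (p : WittVector p A) * z ∧
      z = τ ((g ^ (p - 1)) ^ p) * wittRem φ hφ htf (τ g)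
        - (-1) ^ p * (p : WittVector p A) ^ (p - 2) * τ (Δ ^ p) + (p : WittVector p A) * w := by
  have hp := (Fact.out : p.Prime)
  obtain ⟨y, hy⟩ : ∃ y, y = wittRem φ hφ htf (τ g) := ⟨_, rfl⟩
  obtain ⟨y', hy'⟩ : ∃ y', y' = wittRem φ hφ htf (τ (g ^ p)) := ⟨_, rfl⟩
  rw [← hy, ← hy']
  have hVy : verschiebung y = τ g - wittLift φ hφ htf g := by
    rw [hy, verschiebung_wittRem, teichmuller_coeff_zero]
  have hVy' : verschiebung y' = τ (g ^ p) - wittLift φ hφ htf (g ^ p) := by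
    rw [hy', verschiebung_wittRem, teichmuller_coeff_zero]
  have hpV : ∀ x : WittVector p A, verschiebung ((p : WittVector p A) * x) =
      (p : WittVector p A) * verschiebung x := fun x => by
    rw [← nsmul_eq_mul, map_nsmul, nsmul_eq_mul]
  have h1 : (p : WittVector p A) * y =
      verschiebung y' + (p : WittVector p A) * wittLift φ hφ htf Δ := by
    have := congrArg frobenius hVy
    rw [frobenius_verschiebung, map_sub, frobenius_teichmuller htf, frobenius_wittLift] at this
    have h2 := congrArg (wittLift φ hφ htf) hΔ
    rw [map_mul, map_natCast, map_sub] at h2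
    linear_combination this - hVy' - h2
  have h0 : y.coeff 0 = Δ := by
    have := congrArg (WittVector.constantCoeff (p := p) (R := A)) h1
    rw [map_add, map_mul, map_mul, map_natCast] at this
    have e : WittVector.constantCoeff (p := p) (R := A) (verschiebung y') = 0 :=
      verschiebung_coeff_zero y'
    have e1 : WittVector.constantCoeff (p := p) (R := A) (wittLift φ hφ htf Δ) = Δ :=
      wittLift_coeff_zero φ hφ htf Δ
    rw [e, e1, zero_add] at this
    exact sub_eq_zero.mp (htf _ (by rw [mul_sub]; exact sub_eq_zero.mpr this))
  obtain ⟨z, hyz⟩ : ∃ z, y = wittLift φ hφ htf Δ + verschiebung z := by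
    have := wittLift_add_verschiebung φ hφ htf y
    rw [h0] at this
    exact ⟨_, this⟩
  have hzy' : y' = (p : WittVector p A) * z := by
    apply verschiebung_injective p A
    rw [hpV]
    have h2 := congrArg (fun t => (p : WittVector p A) * t) hyz
    simp only [mul_add] at h2
    linear_combination h2 - h1
  obtain ⟨Q, hQ⟩ := exists_sub_pow_prime hp (τ g) (verschiebung y)
  obtain ⟨w, hw⟩ := exists_pow_eq y
  rw [h0] at hw
  obtain ⟨k, hk⟩ := Nat.exists_eq_add_of_le' hp.two_le
  have hs : τ g - verschiebung y = wittLift φ hφ htf g := by rw [hVy]; ring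
  have hVp : (-verschiebung y) ^ p =
      (-1) ^ p * ((p : WittVector p A) * ((p : WittVector p A) ^ (p - 2) * verschiebung (y ^ p))) := by
    have := verschiebung_pow y (k + 1)
    have e : k + 1 + 1 = p := hk.symm
    have e' : k = p - 2 := by omega
    rw [e, e'] at this
    rw [neg_pow, this, pow_succ]
    ring
  rw [hs, hVp, verschiebung_pow y 1, pow_one] at hQ
  have hVz : verschiebung z = τ g ^ (p - 1) * verschiebung y
      - (-1) ^ p * ((p : WittVector p A) ^ (p - 2) * verschiebung (y ^ p))
      - (p : WittVector p A) * verschiebung (y ^ 2) * Q := by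
    apply witt_torsionFree htf
    rw [← hpV, ← hzy', hVy', map_pow (WittVector.teichmuller p), map_pow (wittLift φ hφ htf), hQ]
    ring
  refine ⟨z, -((-1) ^ p * (p : WittVector p A) ^ (p - 2) * w) - y ^ 2 * frobenius Q,
    hyz, hzy', ?_⟩
  apply verschiebung_injective p A
  rw [hVz]
  have e1 : verschiebung (τ ((g ^ (p - 1)) ^ p) * y) = τ g ^ (p - 1) * verschiebung y := by
    rw [mul_comm (τ g ^ (p - 1)), verschiebung_mul,
      ← map_pow (WittVector.teichmuller p), frobenius_teichmuller htf, mul_comm]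
  have e2 : (-1 : WittVector p A) ^ p * ((p : WittVector p A) ^ (p - 2) * verschiebung (y ^ p)) =
      verschiebung ((-1) ^ p * (p : WittVector p A) ^ (p - 2) * y ^ p) := by
    have hF : WittVector.frobenius ((-1 : WittVector p A) ^ p * (p : WittVector p A) ^ (p - 2)) =
        (-1 : WittVector p A) ^ p * (p : WittVector p A) ^ (p - 2) := by
      rw [map_mul, map_pow, map_pow, map_neg, map_one, map_natCast]
    rw [← mul_assoc, mul_comm, verschiebung_mul, hF, mul_comm]
  have e3 : (p : WittVector p A) * verschiebung (y ^ 2) * Q =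
      verschiebung ((p : WittVector p A) * (y ^ 2 * frobenius Q)) := by
    rw [hpV, ← verschiebung_mul]; ring
  rw [e2, e3, ← e1, ← map_sub, ← map_sub, hw]
  refine congrArg (fun t => verschiebung t) ?_
  generalize (-1 : WittVector p A) ^ p = ε
  generalize (p : WittVector p A) ^ (p - 2) = π
  generalize WittVector.frobenius Q = Q'
  ring

end Lift2

end WittLift

/-! ### Regular sequences in local rings -/

section RegularSequences

open RingTheory.Sequence IsLocalRing

variable {R : Type*} [CommRing R] {M : Type*} [AddCommGroup M] [Module R M]

theorem mem_of_isWeaklyRegular_snoc {l : List R} {a : R} (h : IsWeaklyRegular R (l ++ [a])) {y : R}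
    (hy : a * y ∈ Ideal.ofList l) : y ∈ Ideal.ofList l := by
  rw [isWeaklyRegular_append_iff, isWeaklyRegular_singleton_iff] at h
  have := mem_of_isSMulRegular_quotient_of_smul_mem h.2 (x := y)
  simpa using this (by simpa using hy)

theorem isWeaklyRegular_snoc {l : List R} {a : R} (h : IsWeaklyRegular R l)
    (ha : ∀ y, a * y ∈ Ideal.ofList l → y ∈ Ideal.ofList l) : IsWeaklyRegular R (l ++ [a]) := by
  rw [isWeaklyRegular_append_iff, isWeaklyRegular_singleton_iff]
  refine ⟨h, (isSMulRegular_quotient_iff_mem_of_smul_mem _ _).mpr fun y hy => ?_⟩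
  simpa using ha y (by simpa using hy)

theorem isWeaklyRegular_snoc_pow {l : List R} {a : R} (e : ℕ)
    (h : IsWeaklyRegular M (l ++ [a])) : IsWeaklyRegular M (l ++ [a ^ e]) := by
  rw [isWeaklyRegular_append_iff, isWeaklyRegular_singleton_iff] at h ⊢
  exact ⟨h.1, h.2.pow e⟩

theorem perm_append_cons_snoc {α : Type*} (l₁ : List α) (a : α) (l₂ : List α) :
    (l₁ ++ a :: l₂).Perm ((l₁ ++ l₂) ++ [a]) :=
  List.perm_middle.trans (List.perm_append_singleton a (l₁ ++ l₂)).symm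

theorem ofList_append_cons (l₁ : List R) (a : R) (l₂ : List R) :
    Ideal.ofList (l₁ ++ a :: l₂) = Ideal.span {a} ⊔ Ideal.ofList (l₁ ++ l₂) := by
  rw [← Ideal.ofList_cons]
  exact congrArg Ideal.span (Set.ext fun x => by simp [or_left_comm])

variable [IsNoetherianRing R] [IsLocalRing R] [Module.Finite R M]

theorem isWeaklyRegular_replace_pow {l₁ : List R} {a : R} {l₂ : List R} (e : ℕ) (he : e ≠ 0)
    (hm : ∀ x ∈ l₁ ++ a :: l₂, x ∈ maximalIdeal R) (h : IsWeaklyRegular M (l₁ ++ a :: l₂)) :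
    IsWeaklyRegular M (l₁ ++ a ^ e :: l₂) := by
  have h1 := isWeaklyRegular_of_perm_of_subset_maximalIdeal h (perm_append_cons_snoc l₁ a l₂) hm
  refine isWeaklyRegular_of_perm_of_subset_maximalIdeal (isWeaklyRegular_snoc_pow e h1)
    (perm_append_cons_snoc l₁ (a ^ e) l₂).symm ?_
  intro x hx
  simp only [List.append_assoc, List.mem_append, List.mem_cons, List.not_mem_nil, or_false] at hx hm
  rcases hx with hx | hx | rfl
  · exact hm x (Or.inl hx)
  · exact hm x (Or.inr (Or.inr hx))
  · exact Ideal.pow_mem_of_mem _ (hm a (Or.inr (Or.inl rfl))) e (Nat.pos_of_ne_zero he)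

/-- Powers of the members of a regular sequence in a local ring form a regular sequence; the
prefix `l₁` is kept as it is. -/
theorem isWeaklyRegular_map_pow (e : ℕ) (he : e ≠ 0) (l₁ l₂ : List R)
    (hm : ∀ x ∈ l₁ ++ l₂, x ∈ maximalIdeal R) (h : IsWeaklyRegular M (l₁ ++ l₂)) :
    IsWeaklyRegular M (l₁ ++ l₂.map (· ^ e)) := by
  induction l₂ generalizing l₁ with
  | nil => simpa using h
  | cons a l ih =>
    have h1 := isWeaklyRegular_replace_pow e he hm h
    have := ih (l₁ ++ [a ^ e]) (by
      intro x hx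
      simp only [List.append_assoc, List.mem_append, List.mem_cons, List.not_mem_nil, or_false] at hx hm
      rcases hx with hx | rfl | hx
      · exact hm x (Or.inl hx)
      · exact Ideal.pow_mem_of_mem _ (hm a (Or.inr (Or.inl rfl))) e (Nat.pos_of_ne_zero he)
      · exact hm x (Or.inr (Or.inr hx))) (by simpa using h1)
    simpa using this

theorem mem_of_mul_mem_of_isWeaklyRegular {l₁ : List R} {a : R} {l₂ : List R}
    (hm : ∀ x ∈ l₁ ++ a :: l₂, x ∈ maximalIdeal R) (h : IsWeaklyRegular R (l₁ ++ a :: l₂)) {y : R}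
    (k : ℕ) (hy : a ^ k * y ∈ Ideal.ofList (l₁ ++ l₂)) : y ∈ Ideal.ofList (l₁ ++ l₂) := by
  have h1 := isWeaklyRegular_of_perm_of_subset_maximalIdeal h (perm_append_cons_snoc l₁ a l₂) hm
  exact mem_of_isWeaklyRegular_snoc (isWeaklyRegular_snoc_pow k h1) hy

/-- `((f₁^p, …, f_r^p) : (f₁⋯f_r)^{p-1}) = (f₁, …, f_r)` for a regular sequence, relative to a
prefix `l₁`. -/
theorem mem_of_mul_prod_pow_mem {q : ℕ} (l₁ l₂ : List R)
    (hm : ∀ x ∈ l₁ ++ l₂, x ∈ maximalIdeal R) (h : IsWeaklyRegular R (l₁ ++ l₂)) (x : R)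
    (hx : l₂.prod ^ q * x ∈ Ideal.ofList (l₁ ++ l₂.map (· ^ (q + 1)))) :
    x ∈ Ideal.ofList (l₁ ++ l₂) := by
  induction l₂ generalizing l₁ x with
  | nil => simpa using hx
  | cons a l ih =>
    have h1 := isWeaklyRegular_replace_pow (q + 1) q.succ_ne_zero hm h
    have hx' : a ^ q * x ∈ Ideal.ofList ((l₁ ++ [a ^ (q + 1)]) ++ l) := by
      refine ih (l₁ ++ [a ^ (q + 1)]) ?_ (by simpa using h1) _ ?_
      · intro x hx
        simp only [List.append_assoc, List.mem_append, List.mem_cons, List.not_mem_nil, or_false] at hx hm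
        rcases hx with hx | rfl | hx
        · exact hm x (Or.inl hx)
        · exact Ideal.pow_mem_of_mem _ (hm a (Or.inr (Or.inl rfl))) _ q.succ_pos
        · exact hm x (Or.inr (Or.inr hx))
      · simp only [List.prod_cons, List.map_cons, mul_pow] at hx
        have e : l.prod ^ q * (a ^ q * x) = a ^ q * l.prod ^ q * x := by ring
        rw [e]
        simpa using hx
    rw [List.append_assoc, List.singleton_append, ofList_append_cons,
      Submodule.mem_sup] at hx'
    obtain ⟨s, hs, t, ht, hst⟩ := hx'
    obtain ⟨c, rfl⟩ := Ideal.mem_span_singleton'.mp hs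
    have h2 : x - c * a ∈ Ideal.ofList (l₁ ++ l) := by
      refine mem_of_mul_mem_of_isWeaklyRegular hm h q ?_
      have e : a ^ q * (x - c * a) = t := by linear_combination -hst
      rwa [e]
    rw [ofList_append_cons, Submodule.mem_sup]
    exact ⟨c * a, Ideal.mem_span_singleton'.mpr ⟨c, rfl⟩, _, h2, by ring⟩

/-- `((f₁^p, …, f_r^p) : (f₁, …, f_r)) = (f₁⋯f_r)^{p-1} + (f₁^p, …, f_r^p)` for a regular
sequence, relative to a prefix `l₁`. -/
theorem mem_sup_of_forall_mul_mem {q : ℕ} (l₁ l₂ : List R)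
    (hm : ∀ x ∈ l₁ ++ l₂, x ∈ maximalIdeal R) (h : IsWeaklyRegular R (l₁ ++ l₂)) (x : R)
    (hx : ∀ a ∈ l₂, a * x ∈ Ideal.ofList (l₁ ++ l₂.map (· ^ (q + 1)))) :
    x ∈ Ideal.span {l₂.prod ^ q} ⊔ Ideal.ofList (l₁ ++ l₂.map (· ^ (q + 1))) := by
  induction l₂ generalizing l₁ x with
  | nil => simp
  | cons a l ih =>
    have hma : ∀ x ∈ l₁ ++ a :: l.map (· ^ (q + 1)), x ∈ maximalIdeal R := by
      intro x hx
      simp only [List.mem_append, List.mem_cons, List.mem_map] at hx hm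
      rcases hx with hx | rfl | ⟨y, hy, rfl⟩
      · exact hm x (Or.inl hx)
      · exact hm x (Or.inr (Or.inl rfl))
      · exact Ideal.pow_mem_of_mem _ (hm y (Or.inr (Or.inr hy))) _ q.succ_pos
    have hra : IsWeaklyRegular R (l₁ ++ a :: l.map (· ^ (q + 1))) := by
      have := isWeaklyRegular_map_pow (q + 1) q.succ_ne_zero (l₁ ++ [a]) l (by simpa using hm)
        (by simpa using h)
      simpa using this
    simp only [List.map_cons, ofList_append_cons] at hx ⊢
    obtain ⟨s, hs, t, ht, hst⟩ := Submodule.mem_sup.mp (hx a (by simp))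
    obtain ⟨c, rfl⟩ := Ideal.mem_span_singleton'.mp hs
    have h2 : x - c * a ^ q ∈ Ideal.ofList (l₁ ++ l.map (· ^ (q + 1))) := by
      refine mem_of_mul_mem_of_isWeaklyRegular hma hra 1 ?_
      have e : a ^ 1 * (x - c * a ^ q) = t := by linear_combination -hst
      rwa [e]
    have h3 : c ∈ Ideal.span {l.prod ^ q} ⊔
        Ideal.ofList ((l₁ ++ [a]) ++ l.map (· ^ (q + 1))) := by
      refine ih (l₁ ++ [a]) (by simpa using hm) (by simpa using h) c ?_
      intro b hb
      obtain ⟨s, hs, t, ht, hst⟩ := Submodule.mem_sup.mp (hx b (by simp [hb]))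
      obtain ⟨d, rfl⟩ := Ideal.mem_span_singleton'.mp hs
      have h4 : b * c - d * a ∈ Ideal.ofList (l₁ ++ l.map (· ^ (q + 1))) := by
        refine mem_of_mul_mem_of_isWeaklyRegular hma hra q ?_
        have e : a ^ q * (b * c - d * a) = t - b * (x - c * a ^ q) := by
          linear_combination -hst
        rw [e]
        exact sub_mem ht (Ideal.mul_mem_left _ _ h2)
      rw [List.append_assoc, List.singleton_append, ofList_append_cons, Submodule.mem_sup]
      exact ⟨d * a, Ideal.mem_span_singleton'.mpr ⟨d, rfl⟩, _, h4, by ring⟩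
    rw [List.append_assoc, List.singleton_append, ofList_append_cons] at h3
    obtain ⟨s, hs, t, ht, hst⟩ := Submodule.mem_sup.mp h3
    obtain ⟨d, rfl⟩ := Ideal.mem_span_singleton'.mp hs
    obtain ⟨s, hs, t', ht', rfl⟩ := Submodule.mem_sup.mp ht
    obtain ⟨d', rfl⟩ := Ideal.mem_span_singleton'.mp hs
    have e : x = d * ((a * l.prod) ^ q) +
        (d' * a ^ (q + 1) + (a ^ q * t' + (x - c * a ^ q))) := by
      rw [← hst]; ring
    rw [List.prod_cons, e]
    refine Submodule.add_mem_sup (Ideal.mem_span_singleton'.mpr ⟨d, rfl⟩)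
      (Submodule.add_mem_sup (Ideal.mem_span_singleton'.mpr ⟨d', rfl⟩)
        (add_mem (Ideal.mul_mem_left _ _ ht') h2))

end RegularSequences

/-! ### Regular local rings: `p` as a parameter, and freeness of `F_*Ā` -/

section RegularLocal

open RingTheory.Sequence IsLocalRing

/-- An element of `m = (x₁, …, x_d)` outside `m²` has a unit coefficient at some `x_i`, and so it
may replace that `x_i` as a generator. -/
theorem exists_unit_coeff {R : Type*} [CommRing R] [IsLocalRing R] (l : List R)
    (hm : ∀ x ∈ l, x ∈ maximalIdeal R) (q : R) (hq : q ∈ Ideal.ofList l)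
    (hq2 : q ∉ maximalIdeal R ^ 2) :
    ∃ l₁ x l₂ a, l = l₁ ++ x :: l₂ ∧ IsUnit a ∧ q - a * x ∈ Ideal.ofList (l₁ ++ l₂) := by
  induction l generalizing q with
  | nil =>
    rw [Ideal.ofList_nil, Ideal.mem_bot] at hq
    exact absurd (hq ▸ Ideal.zero_mem _) hq2
  | cons y l ih =>
    rw [Ideal.ofList_cons] at hq
    obtain ⟨s, hs, t, ht, rfl⟩ := Submodule.mem_sup.mp hq
    obtain ⟨a, rfl⟩ := Ideal.mem_span_singleton'.mp hs
    by_cases ha : IsUnit a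
    · exact ⟨[], y, l, a, rfl, ha, by simpa using ht⟩
    · have hay : a * y ∈ maximalIdeal R ^ 2 := by
        rw [pow_two]
        exact Ideal.mul_mem_mul ((mem_maximalIdeal a).mpr ha) (hm y (by simp))
      obtain ⟨l₁, x, l₂, b, rfl, hb, h⟩ := ih (fun x hx => hm x (by simp [hx])) t ht
        (fun h => hq2 (add_mem hay h))
      refine ⟨y :: l₁, x, l₂, b, rfl, hb, ?_⟩
      rw [List.cons_append, Ideal.ofList_cons, add_sub_assoc]
      exact Submodule.add_mem_sup hs h

/-- In a regular local ring, an element of `m ∖ m²` is part of a regular system of parameters. -/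
theorem exists_isRegular_cons {R : Type*} [CommRing R] [IsNoetherianRing R] [IsLocalRing R]
    (h : ∃ rs : List R, IsRegular R rs ∧ Ideal.ofList rs = maximalIdeal R) (q : R)
    (hq : q ∈ maximalIdeal R) (hq2 : q ∉ maximalIdeal R ^ 2) :
    ∃ l : List R, IsWeaklyRegular R (q :: l) ∧ Ideal.ofList (q :: l) = maximalIdeal R := by
  obtain ⟨rs, hreg, hrs⟩ := h
  have hm : ∀ x ∈ rs, x ∈ maximalIdeal R := fun x hx => hrs ▸ Ideal.subset_span hx
  obtain ⟨l₁, x, l₂, a, rfl, ha, hax⟩ := exists_unit_coeff rs hm q (hrs ▸ hq) hq2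
  obtain ⟨a, rfl⟩ := ha
  have h1 := isWeaklyRegular_of_perm_of_subset_maximalIdeal hreg.toIsWeaklyRegular
    (perm_append_cons_snoc l₁ x l₂) hm
  have h2 : IsWeaklyRegular R ((l₁ ++ l₂) ++ [q]) := by
    refine isWeaklyRegular_snoc ((isWeaklyRegular_append_iff R _ _).mp h1).1 fun y hy => ?_
    refine mem_of_isWeaklyRegular_snoc h1 ?_
    have e : x * y = ↑a⁻¹ * (q * y - y * (q - a * x)) := by
      linear_combination (-x * y) * a.inv_mul
    rw [e]
    exact Ideal.mul_mem_left _ _ (sub_mem hy (Ideal.mul_mem_left _ _ hax))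
  have hspan : Ideal.ofList (q :: (l₁ ++ l₂)) = maximalIdeal R := by
    rw [← hrs, Ideal.ofList_cons, ofList_append_cons]
    refine le_antisymm (sup_le ?_ le_sup_right) (sup_le ?_ le_sup_right)
    · rw [Ideal.span_singleton_le_iff_mem]
      have e : q = a * x + (q - a * x) := by ring
      rw [e]
      exact Submodule.add_mem_sup (Ideal.mem_span_singleton'.mpr ⟨a, rfl⟩) hax
    · rw [Ideal.span_singleton_le_iff_mem]
      have e : x = ↑a⁻¹ * q + (- ↑a⁻¹ * (q - a * x)) := by
        linear_combination (-x) * a.inv_mul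
      rw [e]
      exact Submodule.add_mem_sup (Ideal.mem_span_singleton'.mpr ⟨_, rfl⟩)
        (Ideal.mul_mem_left _ _ hax)
  refine ⟨l₁ ++ l₂, isWeaklyRegular_of_perm_of_subset_maximalIdeal h2
    (List.perm_append_singleton q (l₁ ++ l₂)) ?_, hspan⟩
  intro y hy
  rw [← hspan]
  refine Ideal.subset_span ?_
  exact (List.perm_append_singleton q (l₁ ++ l₂)).mem_iff.mp hy

theorem isLocalRing_quotient {R : Type*} [CommRing R] [IsLocalRing R] {I : Ideal R}
    (hI : I ≤ maximalIdeal R) : IsLocalRing (R ⧸ I) :=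
  have : Nontrivial (R ⧸ I) := Ideal.Quotient.nontrivial_iff.mpr
    (ne_top_of_le_ne_top (maximalIdeal.isMaximal R).ne_top hI)
  IsLocalRing.of_surjective' (Ideal.Quotient.mk I) Ideal.Quotient.mk_surjective

theorem map_maximalIdeal_quotient {R : Type*} [CommRing R] [IsLocalRing R] {I : Ideal R}
    [IsLocalRing (R ⧸ I)] :
    (maximalIdeal R).map (Ideal.Quotient.mk I) = maximalIdeal (R ⧸ I) :=
  IsLocalRing.map_maximalIdeal_of_surjective _ Ideal.Quotient.mk_surjective

/-- A finite module on which a regular system of parameters is a regular sequence is free. -/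
theorem free_of_isWeaklyRegular {R : Type*} [CommRing R] [IsNoetherianRing R] [IsLocalRing R]
    {M : Type*} [AddCommGroup M] [Module R M] [Module.Finite R M] (l : List R)
    (hl : Ideal.ofList l = maximalIdeal R) (h : IsWeaklyRegular M l) : Module.Free R M := by
  induction hn : l.length generalizing R M l with
  | zero =>
    rw [List.length_eq_zero_iff.mp hn, Ideal.ofList_nil] at hl
    let := (IsLocalRing.isField_iff_maximalIdeal_eq.mpr hl.symm).toField
    exact Module.Free.of_divisionRing R M
  | succ n ih =>
    obtain ⟨r, l, rfl⟩ := List.exists_cons_of_length_eq_add_one hn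
    rw [isWeaklyRegular_cons_iff'] at h
    have hr : r ∈ maximalIdeal R := hl ▸ Ideal.subset_span (by simp)
    have := isLocalRing_quotient ((Ideal.span_singleton_le_iff_mem _).mpr hr)
    have hfree : Module.Free (R ⧸ Ideal.span {r}) (QuotSMulTop r M) := by
      have : Module.Finite (R ⧸ Ideal.span {r}) (QuotSMulTop r M) :=
        Module.Finite.of_restrictScalars_finite R _ _
      refine ih (l.map (Ideal.Quotient.mk (Ideal.span {r}))) ?_ h.2 (by simpa using hn)
      rw [← Ideal.map_ofList, ← map_maximalIdeal_quotient, ← hl, Ideal.ofList_cons, Ideal.map_sup,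
        Ideal.map_quotient_self, bot_sup_eq]
    have := Module.finitePresentation_of_finite R M
    exact (Module.free_quotSMulTop_iff_free R M (maximalIdeal_le_jacobson _ hr) h.1).mp hfree

/-- `F_*B`: the ring `B`, seen as a `B`-algebra through the Frobenius. -/
def FStar (_p : ℕ) (B : Type*) := B

noncomputable instance (p : ℕ) (B : Type*) [CommRing B] : CommRing (FStar p B) :=
  inferInstanceAs (CommRing B)

noncomputable instance (p : ℕ) (B : Type*) [CommRing B] [Fact p.Prime] [CharP B p] :
    Algebra B (FStar p B) :=
  (frobenius B p).toAlgebra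

/-- Over a regular local ring `B` of characteristic `p` with finite Frobenius, a generator `u` of
`Hom_B(F_*B, B)` comes with a finite family `(b_j)` and its dual family `(u (d_j ·))`. -/
theorem exists_dual_family {p : ℕ} [Fact p.Prime] {B : Type*} [CommRing B] [CharP B p]
    [IsNoetherianRing B] [IsLocalRing B] (l : List B) (hl : Ideal.ofList l = maximalIdeal B)
    (hreg : IsWeaklyRegular B l) (hfin : (frobenius B p).Finite) (u : B → B)
    (hu_gen : ∀ v : B → B, (∀ x y, v (x + y) = v x + v y) → (∀ a x, v (a ^ p * x) = a * v x) →
      ∃ c, ∀ x, v x = u (c * x)) :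
    ∃ (n : ℕ) (b d : Fin n → B), ∀ x, x = ∑ j, u (d j * x) ^ p * b j := by
  have : Module.Finite B (FStar p B) := hfin
  have hm : ∀ x ∈ l, x ∈ maximalIdeal B := fun x hx => hl ▸ Ideal.subset_span hx
  have hp := (Fact.out : p.Prime)
  have hpow : IsWeaklyRegular B (l.map (· ^ p)) := by
    simpa using isWeaklyRegular_map_pow (M := B) p hp.ne_zero [] l (by simpa using hm)
      (by simpa using hreg)
  have hF : IsWeaklyRegular (FStar p B) l := by
    rw [← isWeaklyRegular_map_algebraMap_iff (S := FStar p B)]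
    exact hpow
  have : Module.Free B (FStar p B) := free_of_isWeaklyRegular l hl hF
  let b := Module.finBasis B (FStar p B)
  have hcoord : ∀ j, ∃ c : B, ∀ x : B, b.repr (x : FStar p B) j = u (c * x) := fun j => by
    refine hu_gen (fun x => b.repr (show FStar p B from x) j) ?_ ?_
    · intro x y
      have := congrArg (fun t => t j) (b.repr.map_add (show FStar p B from x) y)
      exact this
    · intro a x
      have := congrArg (fun t => t j) (b.repr.map_smul a (show FStar p B from x))
      rw [Algebra.smul_def] at this
      exact this
  choose d hd using hcoord
  refine ⟨_, fun j => b j, d, fun x => ?_⟩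
  have := b.sum_repr (show FStar p B from x)
  simp only [Algebra.smul_def] at this
  conv_lhs => rw [← show _ = x from this]
  refine Finset.sum_congr rfl fun j _ => ?_
  rw [← hd j x]
  rfl

end RegularLocal

/-! ### Functionals on `W(A)` lifting quasi-`F`-splittings -/

/-- The data of the criterion in the form used by the argument: a `p`-torsion-free ring `A` with a
Frobenius lift `φ`, its reduction `ρ : A → B` modulo `p`, a surjection `π : B → Q` with kernel
`(f₁, …, f_r)B`, and a `p⁻¹`-linear map `u : B → B` with a dual family.  Regularity of `f₁, …, f_r`
enters only through the two colon formulas. -/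
structure FedderSetup (p : ℕ) [Fact p.Prime] (A B Q : Type*) [CommRing A] [CommRing B]
    [CommRing Q] where
  φ : A →+* A
  hφ : ∀ a : A, (p : A) ∣ (φ a - a ^ p)
  htf : ∀ a : A, (p : A) * a = 0 → a = 0
  ρ : A →+* B
  ρ_surj : Function.Surjective ρ
  ρ_ker : ∀ a, ρ a = 0 ↔ (p : A) ∣ a
  π : B →+* Q
  π_surj : Function.Surjective π
  r : ℕ
  f : Fin r → A
  π_ker : RingHom.ker π = Ideal.span (Set.range fun i => ρ (f i))
  u : B →+ B
  u_lin : ∀ a x, u (a ^ p * x) = a * u x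
  n : ℕ
  b : Fin n → B
  d : Fin n → B
  dual : ∀ x, x = ∑ j, u (d j * x) ^ p * b j
  colon_prod : ∀ x, ρ ((∏ i, f i) ^ (p - 1)) * x ∈ Ideal.span (Set.range fun i => ρ (f i) ^ p) →
    x ∈ Ideal.span (Set.range fun i => ρ (f i))
  colon_ideal : ∀ x, (∀ i, ρ (f i) * x ∈ Ideal.span (Set.range fun i => ρ (f i) ^ p)) →
    x ∈ Ideal.span {ρ ((∏ i, f i) ^ (p - 1))} ⊔ Ideal.span (Set.range fun i => ρ (f i) ^ p)

namespace FedderSetup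

open WittVector

variable {p : ℕ} [Fact p.Prime] {A B Q : Type*} [CommRing A] [CommRing B] [CommRing Q]
  (S : FedderSetup p A B Q)

local notation "τ" => WittVector.teichmuller p

/-- The section `s_φ` of `W(A) → A`. -/
noncomputable abbrev s : A →+* WittVector p A := wittLift S.φ S.hφ S.htf

/-- `x ↦ Y x`, where `x = s_φ(x₀) + V (Y x)`. -/
noncomputable def Y : WittVector p A →+ WittVector p A :=
  AddMonoidHom.mk' (wittRem S.φ S.hφ S.htf) (wittRem_add S.φ S.hφ S.htf)

/-- `g = (f₁⋯f_r)^{p-1}`. -/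
def g : A := (∏ i, S.f i) ^ (p - 1)

/-- The ideal `(f₁, …, f_r)` of `A`. -/
def IA : Ideal A := Ideal.span (Set.range S.f)

/-- The Frobenius power `I^{[p]}` of `I = (f₁, …, f_r)B`, through its generators `f_i^p`. -/
def Ip : Ideal B := Ideal.span (Set.range fun i => S.ρ (S.f i) ^ p)

/-- The ideal `I₁ = gB + I^{[p]}`. -/
def I1 : Ideal B := Ideal.span {S.ρ S.g} ⊔ S.Ip

theorem p_eq_zero (S : FedderSetup p A B Q) : (p : B) = 0 := by
  have := (S.ρ_ker p).mpr dvd_rfl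
  rwa [map_natCast] at this

theorem charP (S : FedderSetup p A B Q) [Nontrivial B] : CharP B p :=
  (CharP.charP_iff_prime_eq_zero (Fact.out : p.Prime)).mpr S.p_eq_zero

theorem p_eq_zero_Q (S : FedderSetup p A B Q) : (p : Q) = 0 := by
  have := congrArg S.π S.p_eq_zero
  rwa [map_natCast, map_zero] at this

theorem map_p_mul (S : FedderSetup p A B Q) (ψ : WittVector p A →+ B) (x : WittVector p A) :
    ψ ((p : WittVector p A) * x) = 0 := by
  rw [← nsmul_eq_mul, map_nsmul, nsmul_eq_mul, S.p_eq_zero, zero_mul]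

theorem map_p_mul_Q (S : FedderSetup p A B Q) (σ : WittVector p A →+ Q) (x : WittVector p A) :
    σ ((p : WittVector p A) * x) = 0 := by
  rw [← nsmul_eq_mul, map_nsmul, nsmul_eq_mul, S.p_eq_zero_Q, zero_mul]

theorem verschiebung_p_mul (x : WittVector p A) :
    verschiebung ((p : WittVector p A) * x) = (p : WittVector p A) * verschiebung x := by
  rw [← nsmul_eq_mul, map_nsmul, nsmul_eq_mul]

theorem teichmuller_mul_verschiebung (S : FedderSetup p A B Q) (a : A) (y : WittVector p A) :
    τ a * verschiebung y = verschiebung (τ (a ^ p) * y) := by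
  rw [mul_comm, verschiebung_mul, frobenius_teichmuller S.htf, mul_comm]

theorem eq_s_add (x : WittVector p A) : x = S.s (x.coeff 0) + verschiebung (S.Y x) :=
  wittLift_add_verschiebung S.φ S.hφ S.htf x

theorem Y_eq {x y : WittVector p A} {a : A} (h : x = S.s a + verschiebung y) : S.Y x = y :=
  wittRem_eq S.φ S.hφ S.htf h

theorem exists_s_pow (a : A) : ∃ w, S.s (a ^ p) = τ (a ^ p) + (p : WittVector p A) * w := by
  obtain ⟨w, hw⟩ := exists_pow_eq (S.s a)
  rw [wittLift_coeff_zero] at hw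
  exact ⟨w, by rw [map_pow, hw]⟩

/-! #### Ideal facts -/

theorem mem_ker_iff {x : B} : S.π x = 0 ↔ x ∈ Ideal.span (Set.range fun i => S.ρ (S.f i)) := by
  rw [← S.π_ker, RingHom.mem_ker]

theorem π_ρ_f_mul (i : Fin S.r) (b : B) : S.π (S.ρ (S.f i) * b) = 0 :=
  S.mem_ker_iff.mpr (Ideal.mul_mem_right _ _ (Ideal.subset_span ⟨i, rfl⟩))

theorem f_pow_mul_mem (i : Fin S.r) (b : B) : S.ρ (S.f i) ^ p * b ∈ S.Ip :=
  Ideal.mul_mem_right _ _ (Ideal.subset_span ⟨i, rfl⟩)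

theorem exists_g_mul_f (i : Fin S.r) : ∃ h, S.g * S.f i = S.f i ^ p * h := by
  obtain ⟨h, hh⟩ : S.f i ∣ ∏ j, S.f j := Finset.dvd_prod_of_mem _ (Finset.mem_univ i)
  obtain ⟨k, hk⟩ := Nat.exists_eq_add_of_le' (Fact.out : p.Prime).one_le
  refine ⟨h ^ k, ?_⟩
  have e : p - 1 = k := by omega
  have e2 : S.f i ^ p = S.f i ^ (k + 1) := congrArg (S.f i ^ ·) hk
  rw [e2, g, hh, e]
  ring

/-- `I₁ · I ⊆ I^{[p]}`. -/
theorem I1_mul_mem {c x : B} (hc : c ∈ S.I1) (hx : S.π x = 0) : c * x ∈ S.Ip := by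
  obtain ⟨t, ht, t', ht', rfl⟩ := Submodule.mem_sup.mp hc
  obtain ⟨e, rfl⟩ := Ideal.mem_span_singleton'.mp ht
  rw [add_mul]
  refine add_mem ?_ (Ideal.mul_mem_right _ _ ht')
  rw [S.mem_ker_iff] at hx
  induction hx using Submodule.span_induction with
  | mem x hx =>
    obtain ⟨i, rfl⟩ := hx
    obtain ⟨h, hh⟩ := S.exists_g_mul_f i
    have : e * S.ρ S.g * S.ρ (S.f i) = S.ρ (S.f i) ^ p * (S.ρ h * e) := by
      have := congrArg S.ρ hh
      simp only [map_mul, map_pow] at this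
      linear_combination e * this
    rw [this]
    exact S.f_pow_mul_mem i _
  | zero => simp
  | add x y _ _ hx hy => rw [mul_add]; exact add_mem hx hy
  | smul a x _ hx =>
    rw [smul_eq_mul, mul_left_comm]; exact Ideal.mul_mem_left _ _ hx

theorem g_mem_I1 (b : B) : S.ρ S.g * b ∈ S.I1 :=
  Submodule.mem_sup_left (Ideal.mul_mem_right _ _ (Ideal.mem_span_singleton_self _))

/-- `u(I^{[p]}) ⊆ I`. -/
theorem π_u_of_mem {x : B} (hx : x ∈ S.Ip) : S.π (S.u x) = 0 := by
  obtain ⟨c, rfl⟩ := (Ideal.mem_span_range_iff_exists_fun).mp hx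
  rw [map_sum, map_sum]
  refine Finset.sum_eq_zero fun i _ => ?_
  rw [mul_comm, S.u_lin]
  exact S.π_ρ_f_mul i _

theorem π_u_g_mul {x : B} (hx : S.π x = 0) : S.π (S.u (S.ρ S.g * x)) = 0 :=
  S.π_u_of_mem (S.I1_mul_mem (by simpa using S.g_mem_I1 1) hx)

theorem pow_mem_Ip {x : B} (hx : S.π x = 0) : x ^ p ∈ S.Ip := by
  nontriviality B
  have := S.charP
  obtain ⟨c, rfl⟩ := (Ideal.mem_span_range_iff_exists_fun).mp (S.mem_ker_iff.mp hx)
  rw [sum_pow_char]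
  refine sum_mem fun i _ => ?_
  rw [mul_pow, mul_comm]
  exact S.f_pow_mul_mem i _

/-- If `u(cB) ⊆ I` then `c ∈ I^{[p]}`. -/
theorem mem_Ip_of_forall {c : B} (h : ∀ b, S.π (S.u (c * b)) = 0) : c ∈ S.Ip := by
  rw [S.dual c]
  refine sum_mem fun j _ => Ideal.mul_mem_right _ _ (S.pow_mem_Ip ?_)
  rw [mul_comm]
  exact h _

/-- Every `p⁻¹`-linear map `A → Q` is `a ↦ π(u(c a))` for some `c`. -/
theorem exists_eq_u (h : A →+ Q) (hlin : ∀ a x, h (a ^ p * x) = S.π (S.ρ a) * h x) :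
    ∃ c, ∀ a, h a = S.π (S.u (c * S.ρ a)) := by
  choose b' hb' using fun j => S.ρ_surj (S.b j)
  choose w hw using fun j => S.π_surj (h (b' j))
  refine ⟨∑ j, w j ^ p * S.d j, fun a => ?_⟩
  choose t ht using fun j => S.ρ_surj (S.u (S.d j * S.ρ a))
  obtain ⟨e, he⟩ : (p : A) ∣ a - ∑ j, t j ^ p * b' j := by
    rw [← S.ρ_ker, map_sub, map_sum, sub_eq_zero]
    simp only [map_mul, map_pow, ht, hb']
    exact S.dual _
  have ha : a = ∑ j, t j ^ p * b' j + p • e := by rw [nsmul_eq_mul, ← he]; ring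
  have h1 : h a = ∑ j, S.π (S.u (S.d j * S.ρ a)) * S.π (w j) := by
    conv_lhs => rw [ha]
    rw [map_add, map_nsmul, nsmul_eq_mul, S.p_eq_zero_Q, zero_mul, add_zero, map_sum]
    refine Finset.sum_congr rfl fun j _ => ?_
    rw [hlin, ht, hw]
  rw [h1, Finset.sum_mul, map_sum, map_sum]
  refine Finset.sum_congr rfl fun j _ => ?_
  rw [mul_assoc, S.u_lin, map_mul S.π, mul_comm]

/-! #### Witt vectors with coefficients in the ideal -/

/-- The first `n` coefficients of `x` lie in `(f₁, …, f_r)`, i.e. `x` dies in `W_n(R)`. -/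
def Small (n : ℕ) (x : WittVector p A) : Prop :=
  ∀ i < n, x.coeff i ∈ S.IA

theorem small_iff {n : ℕ} {x : WittVector p A} : S.Small n x ↔
    WittVector.truncate n (WittVector.map (Ideal.Quotient.mk S.IA) x) = 0 := by
  rw [← RingHom.mem_ker, WittVector.mem_ker_truncate]
  simp only [WittVector.map_coeff, Ideal.Quotient.eq_zero_iff_mem]
  rfl

theorem Small.mul_left {n : ℕ} {x : WittVector p A} (h : S.Small n x) (y : WittVector p A) :
    S.Small n (y * x) := by
  rw [small_iff] at h ⊢
  rw [map_mul, map_mul, h, mul_zero]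

theorem small_verschiebung {n : ℕ} {x : WittVector p A} (h : S.Small n x) :
    S.Small (n + 1) (verschiebung x) := by
  rintro (_ | i) hi
  · rw [verschiebung_coeff_zero]; exact zero_mem _
  · rw [verschiebung_coeff_succ]; exact h i (by omega)

theorem small_teichmuller {a : A} (ha : a ∈ S.IA) (n : ℕ) : S.Small n (τ a) := by
  rintro (_ | i) _
  · rwa [teichmuller_coeff_zero]
  · rw [teichmuller_coeff_pos p _ _ (Nat.succ_pos i)]; exact zero_mem _

theorem f_mul_mem_IA (i : Fin S.r) (b : A) : S.f i * b ∈ S.IA :=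
  Ideal.mul_mem_right _ _ (Ideal.subset_span ⟨i, rfl⟩)

/-! #### The functionals -/

/-- The functional `x ↦ u(c x₀) + u(g ψ(Y x))` on `W(A)`. -/
noncomputable def step (c : B) (ψ : WittVector p A →+ B) : WittVector p A →+ B :=
  S.u.comp ((AddMonoidHom.mulLeft c).comp (S.ρ.comp WittVector.constantCoeff).toAddMonoidHom) +
    S.u.comp ((AddMonoidHom.mulLeft (S.ρ S.g)).comp (ψ.comp S.Y))

theorem step_apply (c : B) (ψ : WittVector p A →+ B) (x : WittVector p A) :
    S.step c ψ x = S.u (c * S.ρ (x.coeff 0)) + S.u (S.ρ S.g * ψ (S.Y x)) := rfl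

/-- The inductively defined functionals `W(A) → B` which induce maps `W_n(R) → R/p`.  The condition
on `c` is what makes `step c ψ` compatible with the passage from `A` to `R`. -/
inductive IsFun : ℕ → (WittVector p A →+ B) → Prop
  | zero : IsFun 0 0
  | succ {n : ℕ} {ψ : WittVector p A →+ B} (c : B) (hψ : IsFun n ψ)
      (hc : c - ψ (S.Y (τ S.g)) ∈ S.I1) : IsFun (n + 1) (S.step c ψ)

variable {S}

theorem IsFun.semilinear {n : ℕ} {ψ : WittVector p A →+ B} (h : S.IsFun n ψ) (a : A)
    (x : WittVector p A) : ψ (τ (a ^ p) * x) = S.ρ a * ψ x := by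
  induction h generalizing a x with
  | zero => simp
  | succ c hψ hc ih =>
    rename_i n ψ
    obtain ⟨w, hw⟩ := S.exists_s_pow a
    have hx := S.eq_s_add x
    have hY : S.Y (τ (a ^ p) * x + (p : WittVector p A) * (w * S.s (x.coeff 0))) =
        τ ((a ^ p) ^ p) * S.Y x := by
      apply S.Y_eq (a := a ^ p * x.coeff 0)
      rw [← S.teichmuller_mul_verschiebung, map_mul, hw]
      linear_combination τ (a ^ p) * hx
    have h1 : ψ (S.Y (τ (a ^ p) * x)) = S.ρ a ^ p * ψ (S.Y x) := by
      have := congrArg ψ hY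
      rw [map_add, map_add, ih, ← nsmul_eq_mul, map_nsmul, nsmul_eq_mul, S.map_p_mul, add_zero,
        map_pow S.ρ] at this
      exact this
    rw [step_apply, step_apply, h1, mul_coeff_zero, teichmuller_coeff_zero, map_mul S.ρ, map_pow S.ρ,
      mul_left_comm, mul_left_comm (S.ρ S.g), S.u_lin, S.u_lin, mul_add]

theorem IsFun.map_mul_s {n : ℕ} {ψ : WittVector p A →+ B} (h : S.IsFun n ψ) (a : A)
    (x : WittVector p A) : ψ (x * S.s (S.φ a)) = S.ρ a * ψ x := by
  obtain ⟨w, hw⟩ := exists_wittLift_map S.φ S.hφ S.htf a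
  rw [hw, mul_add, map_add, mul_left_comm, S.map_p_mul, add_zero, mul_comm, h.semilinear]

/-- The key congruence `g ψ(y_a) + a ψ(y_g) ∈ I^{[p]}` for `a ∈ f_i A`; it comes from
`y_{ga} = [g^p] y_a + y_g s_φ(φ a)` and `ga ∈ f_i^p A`. -/
theorem IsFun.key {n : ℕ} {ψ : WittVector p A →+ B} (h : S.IsFun n ψ) (i : Fin S.r) (b : A) :
    S.ρ S.g * ψ (S.Y (τ (S.f i * b))) + S.ρ (S.f i * b) * ψ (S.Y (τ S.g)) ∈ S.Ip := by
  have h1 : ψ (S.Y (τ (S.g * (S.f i * b)))) =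
      S.ρ S.g * ψ (S.Y (τ (S.f i * b))) + S.ρ (S.f i * b) * ψ (S.Y (τ S.g)) := by
    have : S.Y (τ (S.g * (S.f i * b))) = _ :=
      wittRem_teichmuller_mul S.φ S.hφ S.htf S.g (S.f i * b)
    rw [this, map_add, h.semilinear, h.map_mul_s]
    rfl
  obtain ⟨c, hc⟩ := S.exists_g_mul_f i
  have h2 : S.g * (S.f i * b) = S.f i ^ p * (c * b) := by linear_combination b * hc
  have h3 : S.Y (τ (S.f i ^ p * (c * b))) = _ :=
      wittRem_teichmuller_mul S.φ S.hφ S.htf (S.f i ^ p) (c * b)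
  obtain ⟨e, he⟩ := S.hφ (S.f i)
  obtain ⟨z, -, -, hz, -⟩ := wittRem_teichmuller_structure S.φ S.hφ S.htf (S.f i) (-e)
    (by linear_combination he)
  rw [← h1, h2, h3, map_add, hz, mul_assoc, S.map_p_mul, add_zero, h.semilinear, map_pow]
  exact S.f_pow_mul_mem i _

theorem step_verschiebung (c : B) (ψ : WittVector p A →+ B) (y : WittVector p A) :
    S.step c ψ (verschiebung y) = S.u (S.ρ S.g * ψ y) := by
  have : S.Y (verschiebung y) = y := wittRem_verschiebung S.φ S.hφ S.htf y
  rw [step_apply, verschiebung_coeff_zero, map_zero, mul_zero, map_zero, zero_add, this]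

theorem step_s (c : B) (ψ : WittVector p A →+ B) (a : A) :
    S.step c ψ (S.s a) = S.u (c * S.ρ a) := by
  have : S.Y (S.s a) = 0 := wittRem_wittLift S.φ S.hφ S.htf a
  rw [step_apply, this, map_zero, mul_zero, map_zero, add_zero, wittLift_coeff_zero]

/-- The functionals descend to `W_n(R) → R/p`. -/
theorem IsFun.kills {n : ℕ} {ψ : WittVector p A →+ B} (h : S.IsFun n ψ) {x : WittVector p A}
    (hx : S.Small n x) : S.π (ψ x) = 0 := by
  induction h generalizing x with
  | zero => simp
  | succ c hψ hc ih =>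
    rename_i n ψ
    have hV : ∀ y, S.Small n y → S.π (S.step c ψ (verschiebung y)) = 0 := fun y hy => by
      rw [step_verschiebung]; exact S.π_u_g_mul (ih hy)
    have hshift : ∀ y : WittVector p A, S.Small (n + 1) y → S.Small n (y.shift 1) := by
      intro y hy i hi
      rw [shift_coeff, add_comm]
      exact hy (i + 1) (by omega)
    have hT : ∀ a ∈ S.IA, S.π (S.step c ψ (τ a)) = 0 := by
      intro a ha
      obtain ⟨d, rfl⟩ := Ideal.mem_span_range_iff_exists_fun.mp ha
      refine (Finset.sum_induction (fun i => d i * S.f i)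
        (fun a => a ∈ S.IA ∧ S.π (S.step c ψ (τ a)) = 0) ?_ ?_ ?_).2
      · rintro a b ⟨ha, ha'⟩ ⟨hb, hb'⟩
        refine ⟨add_mem ha hb, ?_⟩
        have h0 : (τ (a + b) - τ a - τ b).coeff 0 = 0 := by
          have e : ∀ t : A, WittVector.constantCoeff (τ t) = t :=
            fun t => teichmuller_coeff_zero p t
          have : WittVector.constantCoeff (τ (a + b) - τ a - τ b) = 0 := by
            rw [map_sub, map_sub, e, e, e]; ring
          exact this
        have hs : S.Small (n + 1) (τ (a + b) - τ a - τ b) := by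
          rw [small_iff, map_sub, map_sub, map_sub, map_sub,
            S.small_iff.mp (S.small_teichmuller ha _), S.small_iff.mp (S.small_teichmuller hb _),
            S.small_iff.mp (S.small_teichmuller (add_mem ha hb) _)]
          simp
        have := hV _ (hshift _ hs)
        rw [eq_verschiebung_shift h0, map_sub, map_sub, map_sub, map_sub, ha', hb'] at this
        simpa using this
      · exact ⟨zero_mem _, by simp⟩
      · intro i _
        rw [mul_comm]
        refine ⟨S.f_mul_mem_IA i _, ?_⟩
        have h1 := hψ.key i (d i)
        have h2 : (c - ψ (S.Y (τ S.g))) * S.ρ (S.f i * d i) ∈ S.Ip :=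
          S.I1_mul_mem hc (by rw [map_mul]; exact S.π_ρ_f_mul i _)
        have h3 := S.π_u_of_mem (add_mem h1 h2)
        rw [step_apply, teichmuller_coeff_zero, ← map_add, ← h3]
        congr 2
        ring
    rw [teichmuller_add_verschiebung_shift x, map_add, map_add, hT _ (hx 0 (by omega)),
      hV _ (hshift _ hx), add_zero]

/-- Every semilinear map `W_n(R) → R/p` is induced by one of the functionals. -/
theorem exists_isFun (n : ℕ) (σ : WittVector p A →+ Q)
    (hlin : ∀ a x, σ (τ (a ^ p) * x) = S.π (S.ρ a) * σ x) (hkill : ∀ x, S.Small n x → σ x = 0) :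
    ∃ ψ, S.IsFun n ψ ∧ ∀ x, σ x = S.π (ψ x) := by
  induction n generalizing σ with
  | zero =>
    exact ⟨0, .zero, fun x => by rw [hkill x fun i hi => absurd hi (Nat.not_lt_zero i)]; simp⟩
  | succ n ih =>
    -- `σ ∘ s_φ` gives the coefficient `c`
    obtain ⟨c, hc⟩ : ∃ c, ∀ a, σ (S.s a) = S.π (S.u (c * S.ρ a)) := by
      refine S.exists_eq_u (σ.comp S.s.toAddMonoidHom) fun a x => ?_
      obtain ⟨w, hw⟩ := S.exists_s_pow a
      change σ (S.s (a ^ p * x)) = S.π (S.ρ a) * σ (S.s x)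
      rw [map_mul, hw, add_mul, map_add, mul_assoc, S.map_p_mul_Q, add_zero, hlin]
    -- `b ↦ σ (V ([b^p] y))` gives `e y`, well defined modulo `I`
    have hV : ∀ y, ∃ e, ∀ b, σ (verschiebung (τ (b ^ p) * y)) =
        S.π (S.u (S.ρ S.g * e * S.ρ b)) := by
      intro y
      obtain ⟨d, hd⟩ : ∃ d, ∀ b, σ (verschiebung (τ (b ^ p) * y)) = S.π (S.u (d * S.ρ b)) := by
        refine S.exists_eq_u (AddMonoidHom.mk' (fun b => σ (verschiebung (τ (b ^ p) * y))) ?_) ?_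
        · intro a b
          obtain ⟨w, hw⟩ := exists_teichmuller_add_pow (p := p) a b
          rw [hw, add_mul, add_mul, map_add, map_add, map_add, map_add, mul_assoc,
            verschiebung_p_mul, S.map_p_mul_Q, add_zero]
        · intro a x
          change σ (verschiebung (τ ((a ^ p * x) ^ p) * y)) =
            S.π (S.ρ a) * σ (verschiebung (τ (x ^ p) * y))
          rw [mul_pow, map_mul τ, mul_assoc, ← S.teichmuller_mul_verschiebung, hlin]
      have hd1 : d ∈ S.I1 := by
        refine S.colon_ideal d fun i => S.mem_Ip_of_forall fun b => ?_
        obtain ⟨b, rfl⟩ := S.ρ_surj b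
        have h1 := hd (S.f i * b)
        rw [hkill _ (S.small_verschiebung (by
          rw [mul_comm]
          refine (S.small_teichmuller ?_ _).mul_left S y
          exact Ideal.pow_mem_of_mem _ (S.f_mul_mem_IA i b) _ (Fact.out : p.Prime).pos))] at h1
        rw [h1, map_mul S.ρ]
        congr 2
        ring
      obtain ⟨t, ht, t', ht', rfl⟩ := Submodule.mem_sup.mp hd1
      obtain ⟨e, rfl⟩ := Ideal.mem_span_singleton'.mp ht
      refine ⟨e, fun b => ?_⟩
      rw [hd, add_mul, map_add, map_add, S.π_u_of_mem (Ideal.mul_mem_right _ _ ht'), add_zero,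
        mul_comm e]
    choose e he using hV
    have huniq : ∀ x, (∀ b, S.π (S.u (S.ρ S.g * x * S.ρ b)) = 0) → S.π x = 0 := by
      intro x hx
      refine S.mem_ker_iff.mpr (S.colon_prod x (S.mem_Ip_of_forall fun b => ?_))
      obtain ⟨b, rfl⟩ := S.ρ_surj b
      exact hx b
    obtain ⟨ψ, hψ, hψe⟩ := ih (AddMonoidHom.mk' (fun y => S.π (e y)) (by
        intro x y
        rw [← sub_eq_zero, ← map_add, ← map_sub]
        refine huniq _ fun b => ?_
        rw [mul_sub, mul_add, sub_mul, add_mul, map_sub, map_add, map_sub, map_add, ← he, ← he,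
          ← he, mul_add, map_add, map_add, sub_self]))
      (by
        intro a x
        change S.π (e _) = S.π (S.ρ a) * S.π (e x)
        rw [← sub_eq_zero, ← map_mul, ← map_sub]
        refine huniq _ fun b => ?_
        have e1 : S.ρ S.g * (e (τ (a ^ p) * x) - S.ρ a * e x) * S.ρ b =
            S.ρ S.g * e (τ (a ^ p) * x) * S.ρ b - S.ρ S.g * e x * S.ρ (b * a) := by
          rw [map_mul]; ring
        rw [e1, map_sub, map_sub, ← he, ← he, mul_pow, map_mul τ, mul_assoc, sub_self])
      (by
        intro x hx
        refine huniq _ fun b => ?_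
        rw [← he]
        exact hkill _ (S.small_verschiebung (hx.mul_left S _)))
    have hσV : ∀ y, σ (verschiebung y) = S.π (S.u (S.ρ S.g * ψ y)) := by
      intro y
      have h1 := he y 1
      rw [one_pow, map_one, one_mul, map_one, mul_one] at h1
      have h2 : S.π (e y) = S.π (ψ y) := hψe y
      have h3 := S.π_u_g_mul (x := e y - ψ y) (by rw [map_sub, h2, sub_self])
      rw [mul_sub, map_sub, map_sub, sub_eq_zero] at h3
      rw [h1, h3]
    have hσ : ∀ x, σ x = S.π (S.step c ψ x) := by
      intro x
      conv_lhs => rw [S.eq_s_add x]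
      rw [map_add, hc, hσV, ← map_add, step_apply]
    refine ⟨_, .succ c hψ (S.colon_ideal _ fun i => S.mem_Ip_of_forall fun b => ?_), hσ⟩
    obtain ⟨b, rfl⟩ := S.ρ_surj b
    have h1 := hσ (τ (S.f i * b))
    rw [hkill _ (S.small_teichmuller (S.f_mul_mem_IA i b) _), step_apply, teichmuller_coeff_zero,
      ← map_add] at h1
    have h2 := S.π_u_of_mem (hψ.key i b)
    have h3 : S.ρ (S.f i) * (c - ψ (S.Y (τ S.g))) * S.ρ b =
        (c * S.ρ (S.f i * b) + S.ρ S.g * ψ (S.Y (τ (S.f i * b)))) -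
        (S.ρ S.g * ψ (S.Y (τ (S.f i * b))) + S.ρ (S.f i * b) * ψ (S.Y (τ S.g))) := by
      rw [map_mul S.ρ]; ring
    rw [h3, map_sub, map_sub, ← h1, h2, sub_zero]

end FedderSetup

namespace FedderSetup

open WittVector

variable {p : ℕ} [Fact p.Prime] {A B Q : Type*} [CommRing A] [CommRing B] [CommRing Q]
  {S : FedderSetup p A B Q}

local notation "τ" => WittVector.teichmuller p

/-! ### The ideals `I_n` and the criterion -/

/-- The set of values `u(b z)` for `z` in an ideal is an ideal, hence contains its span. -/
theorem mem_span_u_iff (b : B) (K : Ideal B) (y : B) :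
    y ∈ Ideal.span {y | ∃ z ∈ K, y = S.u (b * z)} ↔ ∃ z ∈ K, y = S.u (b * z) := by
  refine ⟨fun h => ?_, fun h => Ideal.subset_span h⟩
  induction h using Submodule.span_induction with
  | mem x hx => exact hx
  | zero => exact ⟨0, zero_mem _, by simp⟩
  | add x y _ _ hx hy =>
    obtain ⟨z, hz, rfl⟩ := hx
    obtain ⟨w, hw, rfl⟩ := hy
    exact ⟨z + w, add_mem hz hw, by rw [mul_add, map_add]⟩
  | smul a x _ hx =>
    obtain ⟨z, hz, rfl⟩ := hx
    exact ⟨a ^ p * z, Ideal.mul_mem_left _ _ hz, by rw [mul_left_comm, S.u_lin, smul_eq_mul]⟩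

/-- The value at `Y [g]` of `step c ψ`, modulo `I₁` and up to a correction of `c` inside `gB`. -/
theorem IsFun.exists_step_eq {δ : A} (hδ : (p : A) * δ = S.g ^ p - S.φ S.g) {n : ℕ}
    {ψ : WittVector p A →+ B} (h : S.IsFun n ψ) : ∃ e, ∀ c,
    S.step c ψ (S.Y (τ S.g)) - S.u (S.ρ δ * (c - S.ρ S.g * e)) ∈ S.I1 := by
  obtain ⟨z, w, h1, -, h3⟩ := wittRem_teichmuller_structure S.φ S.hφ S.htf S.g δ hδ
  have h1' : S.Y (τ S.g) = S.s δ + verschiebung z := h1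
  have h3' : z = τ ((S.g ^ (p - 1)) ^ p) * S.Y (τ S.g) -
    (-1) ^ p * (p : WittVector p A) ^ (p - 2) * τ (δ ^ p) + (p : WittVector p A) * w := h3
  have e1 : (-1) ^ p * (p : WittVector p A) ^ (p - 2) * τ (δ ^ p) =
      ((-1) ^ p * (p : ℤ) ^ (p - 2)) • (τ (δ ^ p) * 1) := by
    rw [zsmul_eq_mul]; push_cast; ring
  have hz : ψ z = S.ρ S.g ^ (p - 1) * ψ (S.Y (τ S.g)) -
      S.ρ δ * (((-1) ^ p * (p : ℤ) ^ (p - 2)) • ψ 1) := by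
    conv_lhs => rw [h3']
    rw [map_add, S.map_p_mul, add_zero, map_sub, h.semilinear, map_pow S.ρ, e1, map_zsmul,
      h.semilinear, mul_smul_comm]
  refine ⟨((-1) ^ p * (p : ℤ) ^ (p - 2)) • ψ 1, fun c => ?_⟩
  generalize ((-1) ^ p * (p : ℤ) ^ (p - 2)) • ψ 1 = e at hz ⊢
  rw [h1', map_add, step_s, step_verschiebung, hz]
  have e2 : S.ρ S.g * (S.ρ S.g ^ (p - 1) * ψ (S.Y (τ S.g)) - S.ρ δ * e) =
      S.ρ S.g ^ p * ψ (S.Y (τ S.g)) - S.ρ δ * (S.ρ S.g * e) := by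
    have : S.ρ S.g ^ p = S.ρ S.g ^ (p - 1) * S.ρ S.g :=
      (pow_sub_one_mul (Fact.out : p.Prime).ne_zero _).symm
    rw [this]; ring
  rw [e2, map_sub, S.u_lin, mul_sub, map_sub, mul_comm c]
  have := S.g_mem_I1 (S.u (ψ (S.Y (τ S.g))))
  convert this using 1
  ring

/-- The coefficients `c` allowed in the `(n+1)`-st step are exactly the elements of `I_{n+1}`. -/
theorem exists_isFun_iff_mem {δ : A} (hδ : (p : A) * δ = S.g ^ p - S.φ S.g) {J : ℕ → Ideal B}
    (hJ1 : J 1 = S.I1)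
    (hJ : ∀ n, J (n + 2) = Ideal.span {y | ∃ z ∈ J (n + 1), y = S.u (S.ρ δ * z)} ⊔ S.I1)
    (n : ℕ) (c : B) :
    (∃ ψ, S.IsFun n ψ ∧ c - ψ (S.Y (τ S.g)) ∈ S.I1) ↔ c ∈ J (n + 1) := by
  induction n generalizing c with
  | zero =>
    rw [zero_add, hJ1]
    constructor
    · rintro ⟨ψ, hψ, hc⟩
      cases hψ
      simpa using hc
    · intro hc
      exact ⟨0, .zero, by simpa using hc⟩
  | succ n ih =>
    have hle : S.I1 ≤ J (n + 1) := by
      cases n with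
      | zero => rw [zero_add, hJ1]
      | succ n => rw [hJ]; exact le_sup_right
    have hge : ∀ e : B, S.ρ S.g * e ∈ J (n + 1) := fun e => hle (S.g_mem_I1 e)
    rw [hJ]
    constructor
    · rintro ⟨ψ, hψ, hc⟩
      cases hψ with
      | succ c' hψ hc' =>
        rename_i ψ
        obtain ⟨e, he⟩ := hψ.exists_step_eq hδ
        have hmem := (ih c').mp ⟨ψ, hψ, hc'⟩
        refine Submodule.mem_sup.mpr ⟨S.u (S.ρ δ * (c' - S.ρ S.g * e)),
          Ideal.subset_span ⟨_, sub_mem hmem (hge e), rfl⟩, _, add_mem hc (he c'), by ring⟩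
    · intro hc
      obtain ⟨y, hy, t, ht, rfl⟩ := Submodule.mem_sup.mp hc
      obtain ⟨z, hz, rfl⟩ := (mem_span_u_iff _ _ _).mp hy
      obtain ⟨ψ, hψ, hzψ⟩ := (ih z).mpr hz
      obtain ⟨e, he⟩ := hψ.exists_step_eq hδ
      refine ⟨S.step (z + S.ρ S.g * e) ψ, .succ _ hψ ?_, ?_⟩
      · rw [add_sub_right_comm]
        exact add_mem hzψ (S.g_mem_I1 e)
      · have := sub_mem ht (he (z + S.ρ S.g * e))
        rw [add_sub_cancel_right] at this
        convert this using 1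
        ring

/-- Splittings of `W_{n+1}(R) → R/p` correspond to elements `c ∈ I_{n+1}` with `u(c) ≡ 1`. -/
theorem exists_splitting_iff {δ : A} (hδ : (p : A) * δ = S.g ^ p - S.φ S.g) {J : ℕ → Ideal B}
    (hJ1 : J 1 = S.I1)
    (hJ : ∀ n, J (n + 2) = Ideal.span {y | ∃ z ∈ J (n + 1), y = S.u (S.ρ δ * z)} ⊔ S.I1)
    (n : ℕ) :
    (∃ σ : WittVector p A →+ Q, (∀ a x, σ (τ (a ^ p) * x) = S.π (S.ρ a) * σ x) ∧
      (∀ x, S.Small (n + 1) x → σ x = 0) ∧ σ 1 = 1) ↔ ∃ c ∈ J (n + 1), S.π (S.u c) = 1 := by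
  constructor
  · rintro ⟨σ, hlin, hkill, h1⟩
    obtain ⟨ψ, hψ, hσ⟩ := exists_isFun (n + 1) σ hlin hkill
    cases hψ with
    | succ c hψ hc =>
      refine ⟨c, (exists_isFun_iff_mem hδ hJ1 hJ n c).mp ⟨_, hψ, hc⟩, ?_⟩
      rw [hσ, ← map_one S.s, step_s, map_one, mul_one] at h1
      exact h1
  · rintro ⟨c, hc, h1⟩
    obtain ⟨ψ, hψ, hcψ⟩ := (exists_isFun_iff_mem hδ hJ1 hJ n c).mpr hc
    have hf := IsFun.succ c hψ hcψ
    refine ⟨S.π.toAddMonoidHom.comp (S.step c ψ), fun a x => ?_, fun x hx => hf.kills hx, ?_⟩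
    · change S.π _ = _ * S.π _
      rw [hf.semilinear, map_mul]
    · change S.π _ = 1
      rw [← map_one S.s, step_s, map_one, mul_one, h1]

/-- For an ideal `K` of the local ring `B`, `u(K)` meets `1 + I` iff `K ⊄ m^{[p]}`. -/
theorem exists_u_eq_one_iff [IsLocalRing B] (hf : ∀ i, S.ρ (S.f i) ∈ IsLocalRing.maximalIdeal B)
    (K : Ideal B) : (∃ c ∈ K, S.π (S.u c) = 1) ↔
      ¬ K ≤ Ideal.span ((fun x => x ^ p) '' (IsLocalRing.maximalIdeal B : Set B)) := by
  have hker : ∀ x, S.π x = 0 → x ∈ IsLocalRing.maximalIdeal B := by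
    intro x hx
    have := S.mem_ker_iff.mp hx
    refine Ideal.span_le.mpr ?_ this
    rintro _ ⟨i, rfl⟩
    exact hf i
  constructor
  · rintro ⟨c, hc, h1⟩ hle
    have hu : S.u c ∈ IsLocalRing.maximalIdeal B := by
      have := hle hc
      clear h1 hc
      rw [← one_mul c]
      refine Submodule.span_induction
        (p := fun c _ => ∀ b, S.u (b * c) ∈ IsLocalRing.maximalIdeal B) ?_ ?_ ?_ ?_ this 1
      · rintro _ ⟨x, hx, rfl⟩ b
        simp only
        rw [mul_comm, S.u_lin]
        exact Ideal.mul_mem_right _ _ hx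
      · intro b; simp
      · intro x y _ _ hx hy b
        rw [mul_add, map_add]; exact add_mem (hx b) (hy b)
      · intro a x _ hx b
        rw [smul_eq_mul, ← mul_assoc]; exact hx _
    have h2 : S.u c - 1 ∈ IsLocalRing.maximalIdeal B :=
      hker _ (by rw [map_sub, h1, map_one, sub_self])
    have h3 := sub_mem hu h2
    rw [sub_sub_cancel] at h3
    exact (IsLocalRing.maximalIdeal.isMaximal B).ne_top ((Ideal.eq_top_iff_one _).mpr h3)
  · intro hle
    obtain ⟨c, hc, hcm⟩ := SetLike.not_le_iff_exists.mp hle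
    obtain ⟨b, hb⟩ : ∃ b, S.u (b * c) ∉ IsLocalRing.maximalIdeal B := by
      by_contra! hall
      refine hcm ?_
      rw [S.dual c]
      exact sum_mem fun j _ => Ideal.mul_mem_right _ _ (Ideal.subset_span ⟨_, hall _, rfl⟩)
    obtain ⟨v, hv⟩ := IsUnit.exists_left_inv (by simpa using hb : IsUnit (S.u (b * c)))
    exact ⟨v ^ p * (b * c), Ideal.mul_mem_left _ _ (Ideal.mul_mem_left _ _ hc), by
      rw [S.u_lin, hv, map_one]⟩

end FedderSetup

/-! ### Assembling the criterion -/

section Assembly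

open IsLocalRing RingTheory.Sequence

theorem ofList_ofFn {R : Type*} [CommRing R] {r : ℕ} (h : Fin r → R) :
    Ideal.ofList (List.ofFn h) = Ideal.span (Set.range h) :=
  congrArg Ideal.span (Set.ext fun x => by simp [List.mem_ofFn])

theorem isWeaklyRegular_quotient {R : Type*} [CommRing R] {q : R} {l : List R}
    (h : IsWeaklyRegular R (q :: l)) : (∀ a, q * a = 0 → a = 0) ∧
      IsWeaklyRegular (R ⧸ Ideal.span {q}) (l.map (Ideal.Quotient.mk (Ideal.span {q}))) := by
  rw [isWeaklyRegular_cons_iff] at h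
  refine ⟨fun a ha => h.1 (by simpa using ha), ?_⟩
  have e : QuotSMulTop q R ≃ₗ[R] R ⧸ Ideal.span {q} :=
    Submodule.quotEquivOfEq _ _ (by
      rw [← Submodule.ideal_span_singleton_smul, smul_eq_mul, Ideal.mul_top])
  exact (isWeaklyRegular_map_algebraMap_iff (S := R ⧸ Ideal.span {q}) _ l).mpr
    ((e.isWeaklyRegular_congr l).mp h.2)

/-- Splittings of `Φ_{A/I,n}` as additive maps on `W(A)` vanishing on the kernel of
`W(A) → W_n(A/I)`. -/
theorem isNQuasiFSplit_iff {p : ℕ} [Fact p.Prime] {A : Type*} [CommRing A] (I : Ideal A) (n : ℕ) :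
    IsNQuasiFSplit p (A ⧸ I) n ↔
      ∃ σ : WittVector p A →+ (A ⧸ I) ⧸ Ideal.span {(p : A ⧸ I)},
        (∀ a x, σ (WittVector.teichmuller p (a ^ p) * x) =
          Ideal.Quotient.mk _ (Ideal.Quotient.mk I a) * σ x) ∧
        (∀ x : WittVector p A, (∀ i < n, x.coeff i ∈ I) → σ x = 0) ∧ σ 1 = 1 := by
  let T : WittVector p A →+* TruncatedWittVector p n (A ⧸ I) :=
    (WittVector.truncate n).comp (WittVector.map (Ideal.Quotient.mk I))
  have hT : Function.Surjective T :=
    (WittVector.truncate_surjective p n (A ⧸ I)).comp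
      (WittVector.map_surjective _ Ideal.Quotient.mk_surjective)
  have hTker : ∀ x, T x = 0 ↔ ∀ i < n, x.coeff i ∈ I := by
    intro x
    change WittVector.truncate n (WittVector.map (Ideal.Quotient.mk I) x) = 0 ↔ _
    rw [← RingHom.mem_ker, WittVector.mem_ker_truncate]
    simp only [WittVector.map_coeff, Ideal.Quotient.eq_zero_iff_mem]
  have hTt : ∀ a : A, T (WittVector.teichmuller p (a ^ p)) =
      WittVector.truncate n (WittVector.teichmuller p (Ideal.Quotient.mk I a ^ p)) := by
    intro a
    change WittVector.truncate n (WittVector.map (Ideal.Quotient.mk I) _) = _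
    rw [WittVector.map_teichmuller, map_pow (Ideal.Quotient.mk I)]
  constructor
  · rintro ⟨σ, hadd, hlin, hone⟩
    refine ⟨(AddMonoidHom.mk' σ hadd).comp T.toAddMonoidHom, fun a x => ?_, fun x hx => ?_, ?_⟩
    · change σ (T _) = _ * σ (T x)
      rw [map_mul, hTt, hlin]
    · change (AddMonoidHom.mk' σ hadd) (T x) = 0
      rw [(hTker x).mpr hx, map_zero]
    · change σ (T 1) = 1
      have := hone 1
      rw [one_pow, map_one, map_one, map_one] at this
      rw [map_one, this]
  · rintro ⟨σ, hlin, hkill, hone⟩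
    have hwd : ∀ x y, T x = T y → σ x = σ y := by
      intro x y h
      rw [← sub_eq_zero, ← map_sub]
      exact hkill _ ((hTker _).mp (by rw [map_sub, h, sub_self]))
    choose t ht using hT
    have hσ : ∀ x, σ (t (T x)) = σ x := fun x => hwd _ _ (ht _)
    have hlin' : ∀ (a : A ⧸ I) (x : TruncatedWittVector p n (A ⧸ I)),
        σ (t (WittVector.truncate n (WittVector.teichmuller p (a ^ p)) * x))
          = Ideal.Quotient.mk _ a * σ (t x) := by
      intro a x
      obtain ⟨a, rfl⟩ := Ideal.Quotient.mk_surjective a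
      rw [← hlin, ← hTt]
      exact hwd _ _ (by rw [ht, map_mul, ht])
    refine ⟨fun x => σ (t x), fun x y => ?_, hlin', fun a => ?_⟩
    · rw [← map_add]
      exact hwd _ _ (by rw [ht, map_add, ht, ht])
    · have := hlin' a 1
      rw [mul_one] at this
      simp only [this]
      rw [← map_one T, hσ, hone, mul_one]

end Assembly

/-- **Fedder-type criterion for quasi-`F`-splitting.**
Let `(A, m)` be a regular local ring (a Noetherian local ring whose maximal ideal is
generated by a regular sequence) with a finite lift of Frobenius `φ : A → A`, and
`p ∈ m \ m²`; set `Ā := A/pA`.  Fix `u : F_*Ā → Ā` generating `Hom_Ā(F_*Ā, Ā)` as an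
`F_*Ā`-module.  Let `f₁, …, f_r` be a regular sequence in `A`, `I := (f₁,…,f_r)Ā`,
`f := f₁⋯f_r`, `R := A/(f₁,…,f_r)` with `p` a nonzerodivisor on `R`.  Define the
ideals `I₁ := f^{p-1}Ā + I^{[p]}` and `I_n := u(F_*(Δ₁(f^{p-1})·I_{n-1})) + I₁` for
`n ≥ 2`, where `p·Δ₁(f^{p-1}) = f^{p(p-1)} − φ(f^{p-1})` in `A`.  Then
`sht(R) = inf { n ≥ 1 : I_n ⊄ m^{[p]} }`. -/
theorem fedder_criterion_quasiFSplit (p : ℕ) [Fact p.Prime]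
    (A : Type*) [CommRing A] [IsNoetherianRing A] [IsLocalRing A]
    -- `A` is a regular local ring: its maximal ideal is generated by a regular sequence
    (hregA : ∃ rs : List A, RingTheory.Sequence.IsRegular A rs ∧
      Ideal.ofList rs = IsLocalRing.maximalIdeal A)
    -- `φ` is a finite lift of Frobenius on `A`
    (φ : A →+* A) (hφ : ∀ a : A, (p : A) ∣ (φ a - a ^ p)) (hφfin : φ.Finite)
    -- `p ∈ m \ m²`
    (hpm : (p : A) ∈ IsLocalRing.maximalIdeal A)
    (hpm2 : (p : A) ∉ (IsLocalRing.maximalIdeal A) ^ 2)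
    -- `u` is a generator of `Hom_Ā(F_*Ā, Ā)` as an `F_*Ā`-module
    (u : A ⧸ Ideal.span {(p : A)} → A ⧸ Ideal.span {(p : A)})
    (hu_add : ∀ x y, u (x + y) = u x + u y)
    (hu_lin : ∀ a x, u (a ^ p * x) = a * u x)
    (hu_gen : ∀ v : A ⧸ Ideal.span {(p : A)} → A ⧸ Ideal.span {(p : A)},
      (∀ x y, v (x + y) = v x + v y) → (∀ a x, v (a ^ p * x) = a * v x) →
      ∃ c, ∀ x, v x = u (c * x))
    -- the regular sequence `f₁, …, f_r`
    (r : ℕ) (f : Fin r → A)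
    (hfreg : RingTheory.Sequence.IsRegular A (List.ofFn f))
    -- `p` is a nonzerodivisor on `R = A/(f₁,…,f_r)`
    (hpR : (p : A ⧸ Ideal.span (Set.range f)) ∈
      nonZeroDivisors (A ⧸ Ideal.span (Set.range f)))
    -- `δ` is the element `Δ₁(f^{p-1})` of `A`
    (δ : A)
    (hδ : (p : A) * δ = (∏ i, f i) ^ (p * (p - 1)) - φ ((∏ i, f i) ^ (p - 1)))
    -- the sequence of ideals `I_n` of `Ā`
    (J : ℕ → Ideal (A ⧸ Ideal.span {(p : A)}))
    (hJ1 : J 1 =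
      Ideal.span {Ideal.Quotient.mk (Ideal.span {(p : A)}) ((∏ i, f i) ^ (p - 1))} ⊔
      Ideal.span ((fun x => x ^ p) ''
        (Ideal.span (Set.range fun i => Ideal.Quotient.mk (Ideal.span {(p : A)}) (f i)) :
          Set (A ⧸ Ideal.span {(p : A)}))))
    (hJn : ∀ n : ℕ, 2 ≤ n → J n =
      Ideal.span {y | ∃ z ∈ J (n - 1),
        y = u (Ideal.Quotient.mk (Ideal.span {(p : A)}) δ * z)} ⊔ J 1) :
    sht p (A ⧸ Ideal.span (Set.range f)) =
      sInf {k : ℕ∞ | ∃ n : ℕ, k = (n : ℕ∞) ∧ 1 ≤ n ∧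
        ¬ (J n ≤ Ideal.span ((fun x => x ^ p) ''
          ((IsLocalRing.maximalIdeal A).map (Ideal.Quotient.mk (Ideal.span {(p : A)})) :
            Set (A ⧸ Ideal.span {(p : A)}))))} := by
  have hp := (Fact.out : p.Prime)
  have hpp : p - 1 + 1 = p := Nat.sub_add_cancel hp.one_le
  obtain ⟨l, hl, hlm⟩ := exists_isRegular_cons hregA (p : A) hpm hpm2
  obtain ⟨htf, hlB⟩ := isWeaklyRegular_quotient hl
  have hple : Ideal.span {(p : A)} ≤ IsLocalRing.maximalIdeal A := by
    rwa [Ideal.span_singleton_le_iff_mem]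
  have : IsLocalRing (A ⧸ Ideal.span {(p : A)}) := isLocalRing_quotient hple
  have hp0 : (p : A ⧸ Ideal.span {(p : A)}) = 0 := by
    rw [← map_natCast (Ideal.Quotient.mk (Ideal.span {(p : A)})), Ideal.Quotient.eq_zero_iff_mem]
    exact Ideal.mem_span_singleton_self _
  have : CharP (A ⧸ Ideal.span {(p : A)}) p := (CharP.charP_iff_prime_eq_zero hp).mpr hp0
  -- `l` is a regular system of parameters of `Ā`, so `F_*Ā` is free and `u` is a perfect pairing
  have hlmB : Ideal.ofList (l.map (Ideal.Quotient.mk (Ideal.span {(p : A)}))) =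
      IsLocalRing.maximalIdeal (A ⧸ Ideal.span {(p : A)}) := by
    rw [← map_maximalIdeal_quotient, ← hlm, Ideal.ofList_cons, Ideal.map_sup, Ideal.map_ofList,
      Ideal.map_quotient_self, bot_sup_eq]
  have hfin : (frobenius (A ⧸ Ideal.span {(p : A)}) p).Finite := by
    refine RingHom.Finite.of_comp_finite (f := Ideal.Quotient.mk (Ideal.span {(p : A)})) ?_
    have e : (frobenius (A ⧸ Ideal.span {(p : A)}) p).comp
        (Ideal.Quotient.mk (Ideal.span {(p : A)})) =
        (Ideal.Quotient.mk (Ideal.span {(p : A)})).comp φ := by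
      ext a
      rw [RingHom.comp_apply, RingHom.comp_apply, frobenius_def, ← map_pow, eq_comm,
        Ideal.Quotient.mk_eq_mk_iff_sub_mem, Ideal.mem_span_singleton]
      exact hφ a
    rw [e]
    exact RingHom.Finite.comp (RingHom.Finite.of_surjective _ Ideal.Quotient.mk_surjective) hφfin
  obtain ⟨n, b, d, hdual⟩ := exists_dual_family _ hlmB hlB hfin u hu_gen
  -- `f₁, …, f_r` stays a regular sequence in `Ā`
  have hfm : ∀ i, f i ∈ IsLocalRing.maximalIdeal A := by
    intro i
    have hne := hfreg.top_ne_smul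
    rw [smul_eq_mul, Ideal.mul_top, ofList_ofFn] at hne
    exact IsLocalRing.le_maximalIdeal hne.symm (Ideal.subset_span ⟨i, rfl⟩)
  have hfB : RingTheory.Sequence.IsWeaklyRegular (A ⧸ Ideal.span {(p : A)})
      (List.ofFn fun i => Ideal.Quotient.mk (Ideal.span {(p : A)}) (f i)) := by
    have h1 : RingTheory.Sequence.IsWeaklyRegular A (List.ofFn f ++ [(p : A)]) := by
      refine isWeaklyRegular_snoc hfreg.toIsWeaklyRegular fun y hy => ?_
      rw [ofList_ofFn, ← Ideal.Quotient.eq_zero_iff_mem] at hy ⊢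
      rw [map_mul, map_natCast, mul_comm] at hy
      exact (mem_nonZeroDivisors_iff_right.mp hpR) _ hy
    have h2 : RingTheory.Sequence.IsWeaklyRegular A ((p : A) :: List.ofFn f) := by
      refine IsLocalRing.isWeaklyRegular_of_perm_of_subset_maximalIdeal h1
        (List.perm_append_singleton _ _) ?_
      intro x hx
      rcases List.mem_append.mp hx with hx | hx
      · obtain ⟨i, rfl⟩ := (List.mem_ofFn' _ _).mp hx
        exact hfm i
      · rw [List.mem_singleton.mp hx]; exact hpm
    have := (isWeaklyRegular_quotient h2).2
    rwa [List.map_ofFn] at this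
  have hfmB : ∀ i, Ideal.Quotient.mk (Ideal.span {(p : A)}) (f i) ∈
      IsLocalRing.maximalIdeal (A ⧸ Ideal.span {(p : A)}) := by
    intro i
    rw [← map_maximalIdeal_quotient]
    exact Ideal.mem_map_of_mem _ (hfm i)
  have hmB : ∀ x ∈ [] ++ List.ofFn (fun i => Ideal.Quotient.mk (Ideal.span {(p : A)}) (f i)),
      x ∈ IsLocalRing.maximalIdeal (A ⧸ Ideal.span {(p : A)}) := by
    intro x hx
    obtain ⟨i, rfl⟩ := (List.mem_ofFn' _ _).mp hx
    exact hfmB i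
  have hpow : Ideal.ofList ([] ++ (List.ofFn fun i =>
      Ideal.Quotient.mk (Ideal.span {(p : A)}) (f i)).map (· ^ (p - 1 + 1))) =
      Ideal.span (Set.range fun i => Ideal.Quotient.mk (Ideal.span {(p : A)}) (f i) ^ p) := by
    rw [List.nil_append, List.map_ofFn, ofList_ofFn, hpp]
    rfl
  have hprod : (List.ofFn fun i => Ideal.Quotient.mk (Ideal.span {(p : A)}) (f i)).prod ^ (p - 1) =
      Ideal.Quotient.mk (Ideal.span {(p : A)}) ((∏ i, f i) ^ (p - 1)) := by
    rw [List.prod_ofFn, map_pow, map_prod]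
  have hcolon1 := mem_of_mul_prod_pow_mem (q := p - 1) _ _ hmB hfB
  have hcolon2 := mem_sup_of_forall_mul_mem (q := p - 1) _ _ hmB hfB
  rw [hpow, hprod, List.nil_append, ofList_ofFn] at hcolon1
  rw [hpow, hprod] at hcolon2
  let π : A ⧸ Ideal.span {(p : A)} →+* (A ⧸ Ideal.span (Set.range f)) ⧸
      Ideal.span {(p : A ⧸ Ideal.span (Set.range f))} :=
    Ideal.Quotient.lift _ ((Ideal.Quotient.mk _).comp (Ideal.Quotient.mk _)) (by
      intro a ha
      obtain ⟨c, rfl⟩ := Ideal.mem_span_singleton.mp ha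
      rw [RingHom.comp_apply, Ideal.Quotient.eq_zero_iff_mem, map_mul, map_natCast]
      exact Ideal.mul_mem_right _ _ (Ideal.mem_span_singleton_self _))
  let S : FedderSetup p A (A ⧸ Ideal.span {(p : A)}) ((A ⧸ Ideal.span (Set.range f)) ⧸
      Ideal.span {(p : A ⧸ Ideal.span (Set.range f))}) :=
    { φ := φ
      hφ := hφ
      htf := htf
      ρ := Ideal.Quotient.mk _
      ρ_surj := Ideal.Quotient.mk_surjective
      ρ_ker := fun a => by rw [Ideal.Quotient.eq_zero_iff_mem, Ideal.mem_span_singleton]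
      π := π
      π_surj := Ideal.Quotient.lift_surjective_of_surjective _ _
        (Ideal.Quotient.mk_surjective.comp Ideal.Quotient.mk_surjective)
      r := r
      f := f
      π_ker := by
        have hmap : Ideal.span (Set.range fun i => Ideal.Quotient.mk (Ideal.span {(p : A)}) (f i)) =
            (Ideal.span (Set.range f)).map (Ideal.Quotient.mk (Ideal.span {(p : A)})) := by
          rw [Ideal.map_span, ← Set.range_comp]; rfl
        apply le_antisymm
        · intro x hx
          obtain ⟨a, rfl⟩ := Ideal.Quotient.mk_surjective x
          have h1 : Ideal.Quotient.mk (Ideal.span {(p : A ⧸ Ideal.span (Set.range f))})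
            (Ideal.Quotient.mk (Ideal.span (Set.range f)) a) = 0 := hx
          rw [Ideal.Quotient.eq_zero_iff_mem, Ideal.mem_span_singleton] at h1
          obtain ⟨c, hc⟩ := h1
          obtain ⟨c, rfl⟩ := Ideal.Quotient.mk_surjective c
          rw [← map_natCast (Ideal.Quotient.mk _), ← map_mul,
            Ideal.Quotient.mk_eq_mk_iff_sub_mem] at hc
          have h2 := Ideal.mem_map_of_mem (Ideal.Quotient.mk (Ideal.span {(p : A)})) hc
          rwa [map_sub, map_mul, map_natCast, hp0, zero_mul, sub_zero, ← hmap] at h2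
        · rw [Ideal.span_le]
          rintro _ ⟨i, rfl⟩
          change Ideal.Quotient.mk _ (Ideal.Quotient.mk _ (f i)) = 0
          have h0 : f i ∈ Ideal.span (Set.range f) := Ideal.subset_span ⟨i, rfl⟩
          rw [Ideal.Quotient.eq_zero_iff_mem.mpr h0, map_zero]
      u := AddMonoidHom.mk' u hu_add
      u_lin := hu_lin
      n := n
      b := b
      d := d
      dual := hdual
      colon_prod := hcolon1
      colon_ideal := fun x hx => hcolon2 x fun a ha => by
        obtain ⟨i, rfl⟩ := (List.mem_ofFn' _ _).mp ha
        exact hx i }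
  have hI1 : J 1 = S.I1 := by
    rw [hJ1]
    refine congrArg₂ _ rfl (le_antisymm ?_ ?_)
    · rw [Ideal.span_le]
      rintro _ ⟨x, hx, rfl⟩
      exact S.pow_mem_Ip (S.mem_ker_iff.mpr hx)
    · refine Ideal.span_le.mpr ?_
      rintro _ ⟨i, rfl⟩
      exact Ideal.subset_span ⟨_, Ideal.subset_span ⟨i, rfl⟩, rfl⟩
  have hJ : ∀ n, J (n + 2) = Ideal.span {y | ∃ z ∈ J (n + 1), y = S.u (S.ρ δ * z)} ⊔ S.I1 := by
    intro n
    rw [hJn (n + 2) (by omega), hI1]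
    rfl
  have hδ' : (p : A) * δ = S.g ^ p - S.φ S.g := by
    rw [hδ, mul_comm p, pow_mul]
    rfl
  unfold sht
  congr 1
  ext k
  refine exists_congr fun n => and_congr_right fun _ => and_congr_right fun hn => ?_
  obtain ⟨n, rfl⟩ := Nat.exists_eq_add_of_le' hn
  rw [map_maximalIdeal_quotient, ← S.exists_u_eq_one_iff hfmB,
    ← FedderSetup.exists_splitting_iff hδ' hI1 hJ, isNQuasiFSplit_iff]
  rfl
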